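/- arXiv:2507.11672 — 5 statements merged into one kernel-verified Lean document; each statement's English description precedes it below -/
import Mathlib

section
/- Let p, q be distinct odd primes. Let k ≥ 1 satisfy 2^k ≥ pq + 1; let a, b ≥ 1 satisfy p^a ≡ 1 (mod 4^k) and q^b ≡ 1 (mod 4^k) and p^a > q^b; and let n > a and m > b satisfy p^{n-1} q^{m-1} ≥ p^a q^{2b}. Then there exists a set A ⊆ ℤ_{p^n q^m} with |A| = p^a q^b such that Φ_{p^j}(X) ∣ A(X) for all 1 ≤ j ≤ a, Φ_{q^j}(X) ∣ A(X) for all 1 ≤ j ≤ b, and Φ_{p^n q^m}(X) ∣ A(X). -/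
open Polynomial

/-- Mask polynomial of a finite subset of `ZMod M`: `A(X) = ∑_{a ∈ A} X^{a.val}`. -/
noncomputable def zmaskPoly (M : ℕ) (A : Finset (ZMod M)) : Polynomial ℤ :=
  ∑ a ∈ A, X ^ a.val

/-!
If `A` is equidistributed modulo `P`, then modulo `X ^ P - 1` its mask polynomial is a multiple of
`1 + X + ⋯ + X ^ (P - 1)`, hence `Φ_d ∣ A` for all `1 ≠ d ∣ P`. On the other hand `Φ_M` divides the
mask polynomial of every coset of a nontrivial subgroup of `ℤ_M`. So it suffices to find a disjoint
union of cosets of the subgroups of order `p` and `q` that is equidistributed modulo `p ^ a` and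
modulo `q ^ b`.

By the Chinese remainder theorem the numbers `F i j` of elements of `A` that are `i` modulo `p ^ a`
and `j` modulo `q ^ b` can be prescribed independently of each other, as long as each is a sum of
copies of `p` and `q` and there is room for that many cosets. Equidistribution means that `F` has
constant row sums and constant column sums. Every number from `(p - 1) * (q - 1)` on is a sum of
copies of `p` and `q`, so it remains to find such a matrix whose nonzero entries are all that large;
this is where the congruences for `p ^ a` and `q ^ b` enter.
-/

section GapMatrix

variable {ι ι₁ ι₂ κ κ₁ κ₂ α : Type*} [Fintype ι] [Fintype ι₁] [Fintype ι₂]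
  [Fintype κ] [Fintype κ₁] [Fintype κ₂] [Fintype α] {g r r₁ r₂ c c₁ c₂ : ℕ}

/-- A matrix of natural numbers whose rows all sum to `r`, whose columns all sum to `c`, and whose
nonzero entries are all at least `g`. Beyond the Frobenius number of `p` and `q` such entries are
sums of copies of `p` and `q`. -/
structure IsGapMatrix (g r c : ℕ) (F : Matrix ι κ ℕ) : Prop where
  row_sum : ∀ i, ∑ j, F i j = r
  col_sum : ∀ j, ∑ i, F i j = c
  entry : ∀ i j, F i j = 0 ∨ g ≤ F i j

namespace IsGapMatrix

theorem transpose {F : Matrix ι κ ℕ} (hF : IsGapMatrix g r c F) : IsGapMatrix g c r F.transpose :=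
  ⟨hF.col_sum, hF.row_sum, fun j i => hF.entry i j⟩

theorem smul_one [DecidableEq ι] (hc : g ≤ c) : IsGapMatrix g c c (c • (1 : Matrix ι ι ℕ)) where
  row_sum i := by simp [Matrix.one_apply]
  col_sum j := by simp [Matrix.one_apply]
  entry i j := by
    obtain rfl | hij := eq_or_ne i j
    · simp [hc]
    · simp [hij]

theorem fromRows {F : Matrix ι₁ κ ℕ} {G : Matrix ι₂ κ ℕ} (hF : IsGapMatrix g r c₁ F)
    (hG : IsGapMatrix g r c₂ G) : IsGapMatrix g r (c₁ + c₂) (F.fromRows G) where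
  row_sum := Sum.rec hF.row_sum hG.row_sum
  col_sum j := by simp [hF.col_sum, hG.col_sum]
  entry := Sum.rec hF.entry hG.entry

theorem fromCols {F : Matrix ι κ₁ ℕ} {G : Matrix ι κ₂ ℕ} (hF : IsGapMatrix g r₁ c F)
    (hG : IsGapMatrix g r₂ c G) : IsGapMatrix g (r₁ + r₂) c (F.fromCols G) := by
  simpa [Matrix.transpose_fromRows] using (hF.transpose.fromRows hG.transpose).transpose

theorem stackRows {F : Matrix ι κ ℕ} (hF : IsGapMatrix g r c F) :
    IsGapMatrix g r (Fintype.card α * c) (F.submatrix (Prod.snd : α × ι → ι) id) where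
  row_sum i := hF.row_sum i.2
  col_sum j := by simp [Fintype.sum_prod_type, hF.col_sum]
  entry i := hF.entry i.2

theorem stackCols {F : Matrix ι κ ℕ} (hF : IsGapMatrix g r c F) :
    IsGapMatrix g (Fintype.card α * r) c (F.submatrix id (Prod.snd : α × κ → κ)) :=
  hF.transpose.stackRows.transpose

theorem submatrix_equiv {F : Matrix ι κ ℕ} (hF : IsGapMatrix g r c F) (e : ι₁ ≃ ι) (f : κ₁ ≃ κ) :
    IsGapMatrix g r c (F.submatrix e f) where
  row_sum i := (f.sum_comp (F (e i))).trans (hF.row_sum _)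
  col_sum j := (e.sum_comp fun i => F i (f j)).trans (hF.col_sum _)
  entry i j := hF.entry (e i) (f j)

end IsGapMatrix

/-- The diagonal block of `seedMatrix`, with entries between `g` and `g + 2`: its columns sum to
`(g + 1) ^ 2` and its rows to `(g + 1) ^ 2 + 1`, except that row `0` falls short by `g + 1`. -/
def seedBlock (g : ℕ) : Matrix (Fin (g + 1)) (Fin (g + 1)) ℕ :=
  fun r s => g + (if r = 0 then 0 else 1) + (if r = s then 1 else 0)

/-- A `(g + 1) ^ 2` by `(g + 1) ^ 2 + 1` matrix with constant row sums and constant column sums: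
the block diagonal matrix of `g + 1` copies of `seedBlock g`, preceded by one column (indexed by
`none`) that makes up the deficit of the row `0` of each block. -/
def seedMatrix (g : ℕ) :
    Matrix (Fin (g + 1) × Fin (g + 1)) (Option (Fin (g + 1) × Fin (g + 1))) ℕ
  | (_, r), none => if r = 0 then g + 1 else 0
  | (h, r), some (h', s) => if h = h' then seedBlock g r s else 0

theorem seedBlock_row_sum (g : ℕ) (r : Fin (g + 1)) :
    (if r = 0 then g + 1 else 0) + ∑ s, seedBlock g r s = (g + 1) ^ 2 + 1 := by
  simp only [seedBlock, Finset.sum_add_distrib, Finset.sum_const, Finset.card_univ,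
    Fintype.card_fin, smul_eq_mul, Finset.sum_ite_eq, Finset.mem_univ, if_true]
  split_ifs <;> ring

theorem seedBlock_col_sum (g : ℕ) (s : Fin (g + 1)) : ∑ r, seedBlock g r s = (g + 1) ^ 2 := by
  have hzero : ∑ r : Fin (g + 1), (if r = 0 then 0 else 1) = g := by
    simp [Fin.sum_univ_succ]
  simp only [seedBlock, Finset.sum_add_distrib, hzero, Finset.sum_const, Finset.card_univ,
    Fintype.card_fin, smul_eq_mul, Finset.sum_ite_eq', Finset.mem_univ, if_true]
  ring

theorem isGapMatrix_seedMatrix (g : ℕ) :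
    IsGapMatrix g ((g + 1) ^ 2 + 1) ((g + 1) ^ 2) (seedMatrix g) where
  row_sum := by
    rintro ⟨h, r⟩
    rw [Fintype.sum_option, Fintype.sum_prod_type_right]
    simpa [seedMatrix] using seedBlock_row_sum g r
  col_sum := by
    rintro (_ | ⟨h, s⟩)
    · simp [seedMatrix, Fintype.sum_prod_type, sq]
    · rw [Fintype.sum_prod_type_right]
      simpa [seedMatrix] using seedBlock_col_sum g s
  entry := by
    rintro ⟨h, r⟩ (_ | ⟨h', s⟩) <;> simp only [seedMatrix, seedBlock] <;> split_ifs <;> omega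

theorem exists_isGapMatrix (g : ℕ) (hκ : Fintype.card κ ≡ 1 [MOD (g + 1) ^ 2])
    (hι : Fintype.card ι ≡ 1 [MOD (g + 1) ^ 2]) (hκ₁ : 1 < Fintype.card κ)
    (hκι : Fintype.card κ ≤ Fintype.card ι) :
    ∃ F : Matrix ι κ ℕ, IsGapMatrix g (Fintype.card κ) (Fintype.card ι) F := by
  obtain ⟨w, hw⟩ := (Nat.modEq_iff_dvd' hκι).1 (hκ.trans hι.symm)
  obtain ⟨v, hv⟩ : ∃ v, Fintype.card κ - 1 = (g + 1) ^ 2 * (v + 1) := by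
    obtain ⟨_ | v, hv⟩ := (Nat.modEq_iff_dvd' hκ₁.le).1 hκ.symm
    · omega
    · exact ⟨v, hv⟩
  have hcκ : Fintype.card κ = (g + 1) ^ 2 + 1 + v * (g + 1) ^ 2 := by lia
  have hcι : Fintype.card ι = Fintype.card κ + w * (g + 1) ^ 2 := by lia
  have hg : g ≤ (g + 1) ^ 2 := by nlinarith
  let B := Fin (g + 1) × Fin (g + 1)
  let f : κ ≃ Option B ⊕ (Fin v × B) := Fintype.equivOfCardEq <| by
    simp only [B, hcκ, Fintype.card_sum, Fintype.card_option, Fintype.card_prod, Fintype.card_fin]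
    ring
  let e : ι ≃ (Option B ⊕ (Fin v × B)) ⊕ (Fin w × B) := Fintype.equivOfCardEq <| by
    simp only [B, hcι, hcκ, Fintype.card_sum, Fintype.card_option, Fintype.card_prod,
      Fintype.card_fin]
    ring
  have hwide := (isGapMatrix_seedMatrix g).fromCols
    ((IsGapMatrix.smul_one (ι := B) hg).stackCols (α := Fin v))
  rw [Fintype.card_fin, ← hcκ] at hwide
  have htall := (IsGapMatrix.smul_one (by lia)).fromRows (hwide.stackRows (α := Fin w))
  rw [Fintype.card_fin, ← hcι] at htall
  exact ⟨_, htall.submatrix_equiv e f⟩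

end GapMatrix

section MaskPolynomial

open Finset

variable {R : Type*} [CommRing R]

theorem X_pow_sub_one_dvd_X_pow_sub_X_pow_mod (P n : ℕ) :
    (X ^ P - 1 : R[X]) ∣ X ^ n - X ^ (n % P) := by
  have h : (X ^ P - 1 : R[X]) ∣ (X ^ P) ^ (n / P) - 1 := by
    simpa only [one_pow] using sub_dvd_pow_sub_pow (X ^ P : R[X]) 1 (n / P)
  convert h.mul_left (X ^ (n % P)) using 1
  rw [mul_sub, mul_one, ← pow_mul, ← pow_add, Nat.mod_add_div]

theorem sum_zmod_val {β : Type*} [AddCommMonoid β] (P : ℕ) [NeZero P] (f : ℕ → β) :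
    ∑ i : ZMod P, f i.val = ∑ i ∈ range P, f i := by
  obtain ⟨n, rfl⟩ := Nat.exists_eq_succ_of_ne_zero (NeZero.ne P)
  exact Fin.sum_univ_eq_sum_range f (n + 1)

theorem cyclotomic_dvd_sum_X_pow_mul {s r : ℕ} (hs : s ≠ 0) (hr : 1 < r) :
    cyclotomic (s * r) R ∣ ∑ x ∈ range r, X ^ (s * x) := by
  have hmem : s ∈ (s * r).properDivisors :=
    Nat.mem_properDivisors.2 ⟨dvd_mul_right s r, lt_mul_of_one_lt_right (Nat.pos_of_ne_zero hs) hr⟩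
  obtain ⟨h, hh⟩ := X_pow_sub_one_mul_cyclotomic_dvd_X_pow_sub_one_of_dvd R hmem
  have hreg : IsRegular (X ^ s - 1 : R[X]) := by
    simpa only [map_one] using (monic_X_pow_sub_C (1 : R) hs).isRegular
  refine ⟨h, hreg.left ?_⟩
  simp only [pow_mul, mul_geom_sum, ← mul_assoc] at hh ⊢
  exact hh

variable {M P c : ℕ} {A : Finset (ZMod M)}

theorem geom_sum_dvd_zmaskPoly_of_card_filter_eq [NeZero P]
    (hA : ∀ i : ZMod P, #{x ∈ A | (x.val : ZMod P) = i} = c) :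
    ∑ i ∈ range P, X ^ i ∣ zmaskPoly M A := by
  have hreduced : ∑ x ∈ A, (X : ℤ[X]) ^ (x.val % P) = (c : ℤ[X]) * ∑ i ∈ range P, X ^ i := calc
    _ = ∑ x ∈ A, (X : ℤ[X]) ^ (x.val : ZMod P).val := by simp only [ZMod.val_natCast]
    _ = ∑ i : ZMod P, ∑ x ∈ A with (x.val : ZMod P) = i, (X : ℤ[X]) ^ i.val :=
      (sum_fiberwise' A (fun x => (x.val : ZMod P)) fun i => X ^ i.val).symm
    _ = (c : ℤ[X]) * ∑ i ∈ range P, X ^ i := by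
      simp only [sum_const, hA, nsmul_eq_mul, ← mul_sum, sum_zmod_val P fun i => (X : ℤ[X]) ^ i]
  have hdiff : ∑ i ∈ range P, X ^ i ∣ zmaskPoly M A - ∑ x ∈ A, X ^ (x.val % P) := by
    rw [zmaskPoly, ← sum_sub_distrib]
    exact dvd_sum fun x _ =>
      (Dvd.intro _ (geom_sum_mul X P)).trans (X_pow_sub_one_dvd_X_pow_sub_X_pow_mod P x.val)
  rw [hreduced] at hdiff
  exact (dvd_sub_left (dvd_mul_left _ _)).1 hdiff

theorem cyclotomic_dvd_zmaskPoly_of_card_filter_eq [NeZero P]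
    (hA : ∀ i : ZMod P, #{x ∈ A | (x.val : ZMod P) = i} = c) {d : ℕ} (hdP : d ∣ P) (hd : d ≠ 1) :
    cyclotomic d ℤ ∣ zmaskPoly M A :=
  (cyclotomic_dvd_geom_sum_of_dvd ℤ hdP hd).trans (geom_sum_dvd_zmaskPoly_of_card_filter_eq hA)

end MaskPolynomial

section FiberUnion

open Finset

/-- The union in `ℤ_{LR}` of fibers over the base points `y < L`: when `w y ∣ R` is positive, the
fiber over `y` is the coset of the subgroup of order `w y` through `y`, and when `w y = 0` it is
empty. -/
def fiberUnion (L R : ℕ) (w : ℕ → ℕ) : Finset (ZMod (L * R)) :=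
  ((range L).sigma fun y => range (w y)).image fun c => ↑(c.1 + L * (R / w c.1 * c.2))

variable {L R : ℕ} {w : ℕ → ℕ}

theorem add_mul_div_mul_lt {r x y : ℕ} (hy : y < L) (hr : r ∣ R) (hR : R ≠ 0) (hx : x < r) :
    y + L * (R / r * x) < L * R := by
  have hlt : R / r * x < R := calc
    R / r * x < R / r * r := Nat.mul_lt_mul_of_pos_left hx
      (Nat.div_pos (Nat.le_of_dvd (Nat.pos_of_ne_zero hR) hr) (Nat.zero_lt_of_lt hx))
    _ = R := Nat.div_mul_cancel hr
  nlinarith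

theorem injOn_fiberUnion (hR : R ≠ 0) (hw : ∀ y < L, w y ≠ 0 → w y ∣ R) :
    Set.InjOn (fun c : (_ : ℕ) × ℕ => c.1 + L * (R / w c.1 * c.2))
      ((range L).sigma fun y => range (w y)) := by
  rintro ⟨y, x⟩ hc ⟨y', x'⟩ hc' heq
  simp only [coe_sigma, Set.mem_sigma_iff, mem_coe, mem_range] at hc hc' heq
  have hy : y = y' := by
    simpa [Nat.mod_eq_of_lt, hc.1, hc'.1] using congrArg (· % L) heq
  subst hy
  have hpos : 0 < R / w y :=
    Nat.div_pos (Nat.le_of_dvd (Nat.pos_of_ne_zero hR) (hw y hc.1 (by lia))) (by lia)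
  have hx : x = x' := Nat.eq_of_mul_eq_mul_left hpos
    (Nat.eq_of_mul_eq_mul_left (by lia) (Nat.add_left_cancel heq))
  rw [hx]

theorem sum_fiberUnion {β : Type*} [AddCommMonoid β] (hR : R ≠ 0)
    (hw : ∀ y < L, w y ≠ 0 → w y ∣ R) (f : ℕ → β) :
    ∑ x ∈ fiberUnion L R w, f x.val =
      ∑ y ∈ range L, ∑ x ∈ range (w y), f (y + L * (R / w y * x)) := by
  have hval : ∀ c ∈ (range L).sigma fun y => range (w y),
      ((c.1 + L * (R / w c.1 * c.2) : ℕ) : ZMod (L * R)).val = c.1 + L * (R / w c.1 * c.2) := by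
    intro c hc
    rw [mem_sigma, mem_range, mem_range] at hc
    exact ZMod.val_cast_of_lt (add_mul_div_mul_lt hc.1 (hw _ hc.1 (by lia)) hR hc.2)
  rw [fiberUnion, sum_image, sum_congr rfl fun c hc => congrArg f (hval c hc), sum_sigma]
  intro c hc c' hc' heq
  refine injOn_fiberUnion hR hw hc hc' ?_
  simpa only [hval c hc, hval c' hc'] using congrArg ZMod.val heq

theorem card_filter_fiberUnion {P : ℕ} (hR : R ≠ 0) (hw : ∀ y < L, w y ≠ 0 → w y ∣ R)
    (hPL : P ∣ L) (i : ZMod P) :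
    #{x ∈ fiberUnion L R w | (x.val : ZMod P) = i} =
      ∑ y ∈ range L with ((y : ℕ) : ZMod P) = i, w y := by
  have hL : (L : ZMod P) = 0 := (ZMod.natCast_eq_zero_iff L P).2 hPL
  rw [card_filter, sum_fiberUnion hR hw fun n => if (n : ZMod P) = i then 1 else 0, sum_filter]
  simp [hL]

theorem cyclotomic_dvd_zmaskPoly_fiberUnion (hL : L ≠ 0) (hR : R ≠ 0)
    (hw : ∀ y < L, w y ≠ 0 → w y ∣ R) (hw₁ : ∀ y < L, w y ≠ 1) :
    cyclotomic (L * R) ℤ ∣ zmaskPoly (L * R) (fiberUnion L R w) := by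
  rw [zmaskPoly, sum_fiberUnion hR hw fun n => (X : ℤ[X]) ^ n]
  refine dvd_sum fun y hy => ?_
  rw [mem_range] at hy
  obtain hzero | hne := eq_or_ne (w y) 0
  · simp [hzero]
  have hdvd := hw y hy hne
  have hfiber := cyclotomic_dvd_sum_X_pow_mul (R := ℤ) (s := L * (R / w y)) (r := w y)
    (mul_ne_zero hL (Nat.div_ne_zero_iff_of_dvd hdvd |>.2 ⟨hR, hne⟩)) (by have := hw₁ y hy; lia)
  rw [mul_assoc, Nat.div_mul_cancel hdvd] at hfiber
  simpa only [pow_add, ← mul_sum, mul_assoc] using hfiber.mul_left (X ^ y)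

end FiberUnion

section Weights

open Finset

theorem exists_weight_sum_eq {α : Type*} {U : Finset α} {s t : ℕ} (hst : s + t ≤ #U) (p q : ℕ) :
    ∃ w : α → ℕ, (∀ x, w x = 0 ∨ w x = p ∨ w x = q) ∧ ∑ x ∈ U, w x = s * p + t * q := by
  classical
  obtain ⟨S, hSU, rfl⟩ := exists_subset_card_eq (s := U) (n := s) (by lia)
  obtain ⟨T, hTU, rfl⟩ := exists_subset_card_eq (s := U \ S) (n := t)
    (by rw [card_sdiff_of_subset hSU]; lia)
  refine ⟨fun x => if x ∈ S then p else if x ∈ T then q else 0, fun x => ?_, ?_⟩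
  · dsimp only
    split_ifs <;> simp
  · rw [← sum_sdiff hSU, sum_congr rfl fun x hx => if_neg (mem_sdiff.1 hx).2, sum_ite_mem,
      inter_eq_right.2 hTU, sum_congr rfl fun x hx => if_pos hx]
    simp [add_comm]

theorem card_range_filter_natCast_eq {D : ℕ} [NeZero D] (K : ℕ) (c : ZMod D) :
    #{y ∈ range (D * K) | ((y : ℕ) : ZMod D) = c} = K := by
  have hD : 0 < D := Nat.pos_of_neZero D
  have hiff : ∀ y : ℕ, (y : ZMod D) = c ↔ y ≡ c.val [MOD D] := fun y => by
    rw [← ZMod.natCast_eq_natCast_iff, ZMod.natCast_zmod_val]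
  simp only [hiff]
  rw [← Nat.count_eq_card_filter_range, Nat.count_modEq_card _ hD, Nat.mul_div_cancel_left _ hD]
  simp

variable {P Q : ℕ} [NeZero P] [NeZero Q]

theorem card_range_filter_natCast_eq_and (hPQ : P.Coprime Q) (K : ℕ) (i : ZMod P) (j : ZMod Q) :
    #{y ∈ range (P * Q * K) | ((y : ℕ) : ZMod P) = i ∧ (y : ZMod Q) = j} = K := by
  have hiff : ∀ y : ℕ, ((y : ZMod P) = i ∧ (y : ZMod Q) = j) ↔
      (y : ZMod (P * Q)) = (ZMod.chineseRemainder hPQ).symm (i, j) := fun y => by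
    rw [RingEquiv.eq_symm_apply, map_natCast, Prod.ext_iff, Prod.fst_natCast, Prod.snd_natCast]
  simp only [hiff, card_range_filter_natCast_eq]

theorem exists_weight_sum_cell_eq (hPQ : P.Coprime Q) {p q K : ℕ} {F : Matrix (ZMod P) (ZMod Q) ℕ}
    (hF : ∀ i j, ∃ s t, s + t ≤ K ∧ s * p + t * q = F i j) :
    ∃ w : ℕ → ℕ, (∀ y, w y = 0 ∨ w y = p ∨ w y = q) ∧
      ∀ i j, ∑ y ∈ range (P * Q * K) with
        ((y : ℕ) : ZMod P) = i ∧ (y : ZMod Q) = j, w y = F i j := by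
  choose s t hst hF using hF
  choose w hw hsum using fun i j =>
    exists_weight_sum_eq ((hst i j).trans_eq (card_range_filter_natCast_eq_and hPQ K i j).symm) p q
  refine ⟨fun y => w y y y, fun y => hw y y y, fun i j => ?_⟩
  rw [← hF, ← hsum]
  refine sum_congr rfl fun y hy => ?_
  obtain ⟨-, rfl, rfl⟩ := mem_filter.1 hy
  rfl

theorem exists_add_le_mul_add_mul_eq {p q g n K : ℕ} (hp : p ≠ 0) (hq : q ≠ 0) (hpq : p.Coprime q)
    (hg : (p - 1) * (q - 1) ≤ g) (hn : n = 0 ∨ g ≤ n) (hnK : n ≤ K) :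
    ∃ s t, s + t ≤ K ∧ s * p + t * q = n := by
  obtain rfl | hn := hn
  · exact ⟨0, 0, by simp⟩
  obtain ⟨s, t, hst⟩ := Nat.exists_add_mul_eq_of_gcd_dvd_of_mul_pred_le p q n
    (by simp [hpq.gcd_eq_one]) (hg.trans hn)
  have hs := Nat.le_mul_of_pos_right s (Nat.pos_of_ne_zero hp)
  have ht := Nat.le_mul_of_pos_right t (Nat.pos_of_ne_zero hq)
  exact ⟨s, t, by lia, hst⟩

end Weights

section Construction

open Finset

variable {p q g : ℕ}

theorem exists_equidistributed_cyclotomic_dvd {P Q K : ℕ} [NeZero P] [NeZero Q]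
    (hp : 1 < p) (hq : 1 < q) (hpq : p.Coprime q) (hg : (p - 1) * (q - 1) ≤ g)
    (hPQ : P.Coprime Q) (hP : P ≡ 1 [MOD (g + 1) ^ 2]) (hQ : Q ≡ 1 [MOD (g + 1) ^ 2])
    (hQ₁ : 1 < Q) (hQP : Q ≤ P) (hQK : Q ≤ K) :
    ∃ A : Finset (ZMod (P * Q * K * (p * q))),
      (∀ i : ZMod P, #{x ∈ A | (x.val : ZMod P) = i} = Q) ∧
      (∀ j : ZMod Q, #{x ∈ A | (x.val : ZMod Q) = j} = P) ∧
      cyclotomic (P * Q * K * (p * q)) ℤ ∣ zmaskPoly (P * Q * K * (p * q)) A := by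
  obtain ⟨F, hF⟩ : ∃ F : Matrix (ZMod P) (ZMod Q) ℕ, IsGapMatrix g Q P F := by
    simpa only [ZMod.card] using exists_isGapMatrix (ι := ZMod P) (κ := ZMod Q) g
      (by rwa [ZMod.card]) (by rwa [ZMod.card]) (by rwa [ZMod.card]) (by rwa [ZMod.card, ZMod.card])
  have hFK : ∀ i j, F i j ≤ K := fun i j =>
    ((single_le_sum_of_canonicallyOrdered (mem_univ j)).trans_eq (hF.row_sum i)).trans hQK
  obtain ⟨w, hw, hcell⟩ := exists_weight_sum_cell_eq hPQ fun i j =>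
    exists_add_le_mul_add_mul_eq (by lia) (by lia) hpq hg (hF.entry i j) (hFK i j)
  have hpq₀ : p * q ≠ 0 := mul_ne_zero (by lia) (by lia)
  have hL : P * Q * K ≠ 0 := mul_ne_zero (mul_ne_zero (NeZero.ne P) (NeZero.ne Q)) (by lia)
  have hdvd : ∀ y < P * Q * K, w y ≠ 0 → w y ∣ p * q := by
    intro y _ hy
    rcases hw y with h | h | h <;> simp_all
  have hne : ∀ y < P * Q * K, w y ≠ 1 := fun y _ => by have := hw y; lia
  have hrow : ∀ i : ZMod P, ∑ y ∈ range (P * Q * K) with ((y : ℕ) : ZMod P) = i, w y = Q := by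
    intro i
    rw [← sum_fiberwise _ fun y : ℕ => (y : ZMod Q)]
    simp only [filter_filter, hcell, hF.row_sum]
  have hcol : ∀ j : ZMod Q, ∑ y ∈ range (P * Q * K) with ((y : ℕ) : ZMod Q) = j, w y = P := by
    intro j
    rw [← sum_fiberwise _ fun y : ℕ => (y : ZMod P)]
    simp only [filter_filter, and_comm, hcell, hF.col_sum]
  refine ⟨fiberUnion (P * Q * K) (p * q) w, fun i => ?_, fun j => ?_,
    cyclotomic_dvd_zmaskPoly_fiberUnion hL hpq₀ hdvd hne⟩
  · rw [card_filter_fiberUnion hpq₀ hdvd ((dvd_mul_right P Q).mul_right K), hrow]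
  · rw [card_filter_fiberUnion hpq₀ hdvd ((dvd_mul_left Q P).mul_right K), hcol]

theorem exists_general_example_odd_primes_general {N a b n m : ℕ}
    (hp : 1 < p) (hq : 1 < q) (hpq : p.Coprime q) (hN : (p - 1) * (q - 1) < N) (hb : b ≠ 0)
    (hpa : p ^ a ≡ 1 [MOD N ^ 2]) (hqb : q ^ b ≡ 1 [MOD N ^ 2])
    (hab : q ^ b ≤ p ^ a) (hn : a < n) (hm : b < m)
    (hsize : p ^ a * q ^ (2 * b) ≤ p ^ (n - 1) * q ^ (m - 1)) :
    ∃ A : Finset (ZMod (p ^ n * q ^ m)),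
      A.card = p ^ a * q ^ b ∧
      (∀ j : ℕ, 1 ≤ j → j ≤ a → cyclotomic (p ^ j) ℤ ∣ zmaskPoly (p ^ n * q ^ m) A) ∧
      (∀ j : ℕ, 1 ≤ j → j ≤ b → cyclotomic (q ^ j) ℤ ∣ zmaskPoly (p ^ n * q ^ m) A) ∧
      cyclotomic (p ^ n * q ^ m) ℤ ∣ zmaskPoly (p ^ n * q ^ m) A := by
  obtain ⟨g, rfl⟩ := Nat.exists_eq_succ_of_ne_zero (Nat.ne_zero_of_lt hN)
  have : NeZero (p ^ a) := ⟨pow_ne_zero a (by lia)⟩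
  have : NeZero (q ^ b) := ⟨pow_ne_zero b (by lia)⟩
  obtain ⟨K, hK⟩ : p ^ a * q ^ b ∣ p ^ (n - 1) * q ^ (m - 1) :=
    mul_dvd_mul (pow_dvd_pow p (by lia)) (pow_dvd_pow q (by lia))
  have hM : p ^ n * q ^ m = p ^ a * q ^ b * K * (p * q) := by
    rw [← hK, mul_mul_mul_comm, pow_sub_one_mul (by lia), pow_sub_one_mul (by lia)]
  have hQK : q ^ b ≤ K := by
    rw [hK, two_mul, pow_add, ← mul_assoc] at hsize
    exact Nat.le_of_mul_le_mul_left hsize (Nat.pos_of_ne_zero (NeZero.ne _))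
  obtain ⟨A, hP, hQ, hA⟩ := exists_equidistributed_cyclotomic_dvd hp hq hpq
    (Nat.le_of_lt_succ hN) (hpq.pow a b) hpa hqb (Nat.one_lt_pow hb hq) hab hQK
  rw [hM]
  refine ⟨A, ?_, fun j hj hja => ?_, fun j hj hjb => ?_, hA⟩
  · rw [card_eq_sum_card_fiberwise (t := univ) fun x _ => mem_univ (x.val : ZMod (p ^ a))]
    simp [hP]
  · exact cyclotomic_dvd_zmaskPoly_of_card_filter_eq hP (pow_dvd_pow p hja)
      (Nat.one_lt_pow (by lia) hp).ne'
  · exact cyclotomic_dvd_zmaskPoly_of_card_filter_eq hQ (pow_dvd_pow q hjb)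
      (Nat.one_lt_pow (by lia) hq).ne'

end Construction

/-- Theorem 7.17 (general example for two odd primes): under the stated numerical
conditions on `k, a, b, n, m`, there is a set `A ⊆ ℤ_{p^n q^m}` with `|A| = p^a q^b`
divisible by `Φ_{p^j}` for `1 ≤ j ≤ a`, by `Φ_{q^j}` for `1 ≤ j ≤ b`, and by `Φ_{p^n q^m}`. -/
theorem exists_general_example_odd_primes (p q : ℕ) (hp : p.Prime) (hq : q.Prime)
    (hpq : p ≠ q) (hpodd : Odd p) (hqodd : Odd q)
    (k a b n m : ℕ) (hk : 1 ≤ k) (h2k : p * q + 1 ≤ 2 ^ k)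
    (ha : 1 ≤ a) (hb : 1 ≤ b)
    (hpa : p ^ a ≡ 1 [MOD 4 ^ k]) (hqb : q ^ b ≡ 1 [MOD 4 ^ k])
    (hab : q ^ b < p ^ a) (hn : a < n) (hm : b < m)
    (hsize : p ^ a * q ^ (2 * b) ≤ p ^ (n - 1) * q ^ (m - 1)) :
    ∃ A : Finset (ZMod (p ^ n * q ^ m)),
      A.card = p ^ a * q ^ b ∧
      (∀ j : ℕ, 1 ≤ j → j ≤ a → cyclotomic (p ^ j) ℤ ∣ zmaskPoly (p ^ n * q ^ m) A) ∧
      (∀ j : ℕ, 1 ≤ j → j ≤ b → cyclotomic (q ^ j) ℤ ∣ zmaskPoly (p ^ n * q ^ m) A) ∧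
      cyclotomic (p ^ n * q ^ m) ℤ ∣ zmaskPoly (p ^ n * q ^ m) A := by
  have hN : (p - 1) * (q - 1) < 2 ^ k :=
    (Nat.mul_le_mul (Nat.sub_le p 1) (Nat.sub_le q 1)).trans_lt h2k
  have h4 : 4 ^ k = (2 ^ k) ^ 2 := pow_right_comm 2 2 k
  exact exists_general_example_odd_primes_general hp.one_lt hq.one_lt
    ((Nat.coprime_primes hp hq).2 hpq) hN (by lia) (h4 ▸ hpa) (h4 ▸ hqb) hab.le hn hm hsize
end

section
/- Let S be a nonempty finite set of integers, each at least 2. Then FIB(S), the minimum cardinality of a nonempty finite A ⊆ ℕ that is fibered on every scale s ∈ S, equals the minimum over all assignment functions σ (functions assigning to each s ∈ S a prime σ(s) dividing s) of the quantity ∏_p p^{E_p(S,σ)}, where for each prime p, E_p(S,σ) := #{α ≥ 1 : ∃ s ∈ S with p^α ∥ s and σ(s) = p}. -/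
/-!
Since `F^N_p(X) (X^{N/p} - 1) = X^N - 1`, the polynomial `F^N_p` is the product of the `Φ_d` with
`d ∣ N` and `pd ∤ N`. In particular it is divisible by `Φ_{p^α}` for `p^α ∥ N`, and it divides
`F^{Nk}_p` for every `k` prime to `p`.

If `A` is fibered on every `s ∈ S`, let `σ(s)` be a prime witnessing this. Then `A(X)` is divisible
by the distinct polynomials `Φ_{p^α}` with `p^α ∥ s` and `σ(s) = p`, hence by their product. As
`Φ_{p^α}(1) = p`, evaluating at `1` shows that `∏_p p^{E_p(S,σ)}` divides `|A|`.

Conversely, given `σ`, all `s` with `σ(s) = p` and `p^α ∥ s` have a common multiple `N` with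
`p^α ∥ N`, and divisibility by `F^N_p` makes a set fibered on all of them at once. Starting from
`{0}`, for each such pair `(p, α)` replace `A` by `p` disjoint translates of itself, which
multiplies `A(X)` by some `F^{Nk}_p`. The final set has exactly `∏_p p^{E_p(S,σ)}` elements.
-/

open Polynomial

/-- The mask polynomial of a finite set of natural numbers: `A(X) = ∑_{a ∈ A} X^a`. -/
noncomputable def maskPoly (A : Finset ℕ) : Polynomial ℤ := ∑ a ∈ A, X ^ a

/-- The fiber polynomial `F^N_p(X) = 1 + X^{N/p} + ⋯ + X^{(p-1)N/p}`. -/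
noncomputable def fiberPoly (N p : ℕ) : Polynomial ℤ :=
  ∑ j ∈ Finset.range p, X ^ (j * (N / p))

/-- A finite set `A ⊆ ℕ` is fibered on scale `N` if some prime `p ∣ N` has
`F^N_p(X) ∣ A(X)`. -/
def IsFibered (A : Finset ℕ) (N : ℕ) : Prop :=
  ∃ p : ℕ, p.Prime ∧ p ∣ N ∧ fiberPoly N p ∣ maskPoly A

/-- `FIB(S)`: the minimal size of a nonempty finite `A ⊆ ℕ` fibered on each scale `s ∈ S`. -/
noncomputable def FIBs (S : Finset ℕ) : ℕ :=
  sInf {k | ∃ A : Finset ℕ, A.Nonempty ∧ A.card = k ∧ ∀ s ∈ S, IsFibered A s}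

/-- `E_p(S,σ) = #{α ≥ 1 : ∃ s ∈ S with p^α ∥ s and σ(s) = p}`. -/
noncomputable def Ecount (S : Finset ℕ) (σ : ℕ → ℕ) (p : ℕ) : ℕ :=
  Set.ncard {α : ℕ | 1 ≤ α ∧ ∃ s ∈ S, p ^ α ∣ s ∧ ¬ p ^ (α + 1) ∣ s ∧ σ s = p}

section Polynomials

variable {ι : Type*} {A : Finset ℕ} {N s p : ℕ}

lemma eval_one_maskPoly (A : Finset ℕ) : (maskPoly A).eval 1 = A.card := by
  simp [maskPoly, eval_finsetSum]

lemma eval_one_fiberPoly (N p : ℕ) : (fiberPoly N p).eval 1 = p := by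
  simp [fiberPoly, eval_finsetSum]

lemma fiberPoly_mul_X_pow_sub_one (hp : p ∣ N) :
    fiberPoly N p * (X ^ (N / p) - 1) = X ^ N - 1 := by
  simp only [fiberPoly, mul_comm _ (N / p), pow_mul, geom_sum_mul]
  rw [← pow_mul, Nat.div_mul_cancel hp]

lemma fiberPoly_eq_prod_cyclotomic (hN : N ≠ 0) (hp : p ∣ N) :
    fiberPoly N p = ∏ d ∈ N.divisors with ¬ p * d ∣ N, cyclotomic d ℤ := by
  have hNp : N / p ≠ 0 := (Nat.div_ne_zero_iff_of_dvd hp).2 ⟨hN, ne_zero_of_dvd_ne_zero hN hp⟩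
  have hdiv : {d ∈ N.divisors | p * d ∣ N} = (N / p).divisors := by
    ext d
    simp only [Finset.mem_filter, Nat.mem_divisors, ← Nat.dvd_div_iff_mul_dvd hp]
    exact ⟨fun h => ⟨h.2, hNp⟩, fun h => ⟨⟨h.1.trans (Nat.div_dvd_of_dvd hp), hN⟩, h.1⟩⟩
  have hmonic : (X ^ (N / p) - 1 : ℤ[X]).Monic := monic_X_pow_sub_C 1 hNp
  apply hmonic.isRegular.right
  calc fiberPoly N p * (X ^ (N / p) - 1) = X ^ N - 1 := fiberPoly_mul_X_pow_sub_one hp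
    _ = ∏ d ∈ N.divisors, cyclotomic d ℤ := (prod_cyclotomic_eq_X_pow_sub_one hN.bot_lt ℤ).symm
    _ = (∏ d ∈ N.divisors with ¬ p * d ∣ N, cyclotomic d ℤ) * (X ^ (N / p) - 1) := by
      rw [← prod_cyclotomic_eq_X_pow_sub_one hNp.bot_lt, ← hdiv, mul_comm,
        Finset.prod_filter_mul_prod_filter_not]

lemma cyclotomic_dvd_fiberPoly {d : ℕ} (hp : p ∣ N) (hd : d ∣ N) (hdp : ¬ p * d ∣ N) :
    cyclotomic d ℤ ∣ fiberPoly N p := by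
  have hN : N ≠ 0 := fun h => hdp (h ▸ dvd_zero _)
  rw [fiberPoly_eq_prod_cyclotomic hN hp]
  exact Finset.dvd_prod_of_mem _ (by simp [hN, hd, hdp])

lemma cyclotomic_ordProj_dvd_fiberPoly (hs : s ≠ 0) (hp : p.Prime) (hps : p ∣ s) :
    cyclotomic (ordProj[p] s) ℤ ∣ fiberPoly s p := by
  refine cyclotomic_dvd_fiberPoly hps (Nat.ordProj_dvd s p) ?_
  rw [← pow_succ']
  exact Nat.pow_succ_factorization_not_dvd hs hp

lemma fiberPoly_dvd_fiberPoly_mul {k : ℕ} (hsk : s * k ≠ 0) (hps : p ∣ s)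
    (hpk : p.Coprime k) : fiberPoly s p ∣ fiberPoly (s * k) p := by
  rw [fiberPoly_eq_prod_cyclotomic (left_ne_zero_of_mul hsk) hps,
    fiberPoly_eq_prod_cyclotomic hsk (hps.mul_right k)]
  refine Finset.prod_dvd_prod_of_subset _ _ _ fun d hd => ?_
  simp only [Finset.mem_filter, Nat.mem_divisors] at hd ⊢
  obtain ⟨⟨hds, -⟩, hpds⟩ := hd
  refine ⟨⟨hds.mul_right k, hsk⟩, fun hpdsk => hpds ?_⟩
  have hgcd : p * d ∣ Nat.gcd (s * p) (s * k) :=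
    Nat.dvd_gcd (mul_comm s p ▸ mul_dvd_mul_left p hds) hpdsk
  rwa [Nat.gcd_mul_left, hpk.gcd_eq_one, mul_one] at hgcd

lemma prod_cyclotomic_dvd {T : Finset ι} {n : ι → ℕ} {f : ℤ[X]} (hn : Set.InjOn n T)
    (hf : ∀ i ∈ T, cyclotomic (n i) ℤ ∣ f) : ∏ i ∈ T, cyclotomic (n i) ℤ ∣ f := by
  rw [← map_dvd_map (Int.castRingHom ℚ) Int.cast_injective
    (monic_prod_of_monic _ _ fun i _ => cyclotomic.monic (n i) ℤ), Polynomial.map_prod]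
  refine Finset.prod_dvd_of_coprime (fun i hi j hj hij => ?_) fun i hi =>
    Polynomial.map_dvd _ (hf i hi)
  simp only [Function.onFun, map_cyclotomic]
  exact cyclotomic.isCoprime_rat (hn.ne hi hj hij)

lemma injOn_prime_pow :
    Set.InjOn (fun x : ℕ × ℕ => x.1 ^ x.2) {x | x.1.Prime ∧ x.2 ≠ 0} := by
  rintro ⟨p, α⟩ ⟨hp, hα⟩ ⟨q, β⟩ ⟨hq, hβ⟩ hpq
  obtain ⟨a, rfl⟩ := Nat.exists_eq_succ_of_ne_zero hα
  obtain ⟨b, rfl⟩ := Nat.exists_eq_succ_of_ne_zero hβ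
  obtain ⟨rfl, rfl⟩ := hp.pow_inj hq hpq
  rfl

lemma prod_fst_dvd_card_of_cyclotomic_dvd {T : Finset (ℕ × ℕ)} (hT : ∀ x ∈ T, x.1.Prime ∧ x.2 ≠ 0)
    (hA : ∀ x ∈ T, cyclotomic (x.1 ^ x.2) ℤ ∣ maskPoly A) : ∏ x ∈ T, x.1 ∣ A.card := by
  have hdvd := eval_dvd (x := 1) (prod_cyclotomic_dvd (injOn_prime_pow.mono hT) hA)
  have heval : ∀ x ∈ T, (cyclotomic (x.1 ^ x.2) ℤ).eval 1 = x.1 := fun x hx => by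
    obtain ⟨hp, hα⟩ := hT x hx
    obtain ⟨k, hk⟩ := Nat.exists_eq_succ_of_ne_zero hα
    have := Fact.mk hp
    rw [hk, eval_one_cyclotomic_prime_pow]
  rw [eval_prod, Finset.prod_congr rfl heval, eval_one_maskPoly] at hdvd
  exact_mod_cast hdvd

end Polynomials

section Construction

variable {ι : Type*} {A S : Finset ℕ} {N p : ℕ}

lemma injOn_mul_add (t : ℕ) :
    Set.InjOn (fun x : ℕ × ℕ => x.1 * t + x.2) {x | x.2 < t} :=
  Set.LeftInvOn.injOn (f₁' := fun n => (n / t, n % t)) fun _ hx =>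
    Prod.ext_iff.2 <| (Nat.div_mod_unique (Nat.zero_lt_of_lt hx)).2 ⟨by ring, hx⟩

lemma exists_maskPoly_eq_fiberPoly_mul (hA : ∀ a ∈ A, a < N / p) :
    ∃ B : Finset ℕ, maskPoly B = fiberPoly N p * maskPoly A := by
  refine ⟨(Finset.range p ×ˢ A).image fun x => x.1 * (N / p) + x.2, ?_⟩
  simp only [maskPoly, fiberPoly]
  have hinj : Set.InjOn (fun x : ℕ × ℕ => x.1 * (N / p) + x.2)
      (Finset.range p ×ˢ A : Finset (ℕ × ℕ)) :=
    (injOn_mul_add (N / p)).mono fun x hx => hA x.2 (Finset.mem_product.1 hx).2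
  rw [Finset.sum_image hinj, Finset.sum_product, Finset.sum_mul_sum]
  simp only [pow_add]

lemma exists_card_eq_mul_and_fiberPoly_dvd_maskPoly (A : Finset ℕ) (hN : N ≠ 0) (hp : p ∣ N) :
    ∃ B : Finset ℕ, B.card = p * A.card ∧ maskPoly A ∣ maskPoly B ∧
      fiberPoly N p ∣ maskPoly B := by
  -- Multiplying the scale by `k`, which is prime to `p`, separates the translates of `A`.
  set k := p * A.sup id + 1
  have hp0 : p ≠ 0 := ne_zero_of_dvd_ne_zero hN hp
  have hsep : ∀ a ∈ A, a < N * k / p := fun a ha => by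
    have haA : a ≤ A.sup id := Finset.le_sup (f := id) ha
    calc a < k := Nat.lt_succ_of_le (haA.trans (Nat.le_mul_of_pos_left _ hp0.bot_lt))
      _ ≤ N / p * k :=
        Nat.le_mul_of_pos_left k (Nat.div_pos (Nat.le_of_dvd hN.bot_lt hp) hp0.bot_lt)
      _ = N * k / p := (Nat.mul_div_right_comm hp k).symm
  obtain ⟨B, hB⟩ := exists_maskPoly_eq_fiberPoly_mul hsep
  refine ⟨B, ?_, hB ▸ dvd_mul_left _ _, hB ▸ Dvd.dvd.mul_right ?_ _⟩
  · have hcard := congrArg (eval 1) hB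
    rw [eval_mul, eval_one_fiberPoly, eval_one_maskPoly, eval_one_maskPoly] at hcard
    exact_mod_cast hcard
  · exact fiberPoly_dvd_fiberPoly_mul (mul_ne_zero hN (Nat.succ_ne_zero _)) hp (by simp [k])

lemma exists_card_eq_prod_and_fiberPoly_dvd_maskPoly {T : Finset ι} {N p : ι → ℕ}
    (hN : ∀ i ∈ T, N i ≠ 0) (hp : ∀ i ∈ T, p i ∣ N i) :
    ∃ A : Finset ℕ, A.card = ∏ i ∈ T, p i ∧ ∀ i ∈ T, fiberPoly (N i) (p i) ∣ maskPoly A := by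
  classical
  induction T using Finset.induction_on with
  | empty => exact ⟨{0}, by simp⟩
  | insert i T hi ih =>
    simp only [Finset.forall_mem_insert] at hN hp ⊢
    obtain ⟨A, hcard, hA⟩ := ih hN.2 hp.2
    obtain ⟨B, hBcard, hAB, hB⟩ :=
      exists_card_eq_mul_and_fiberPoly_dvd_maskPoly A hN.1 hp.1
    exact ⟨B, by rw [hBcard, hcard, Finset.prod_insert hi], hB,
      fun j hj => (hA j hj).trans hAB⟩

lemma exists_common_scale {α : ℕ} (h0 : ∀ s ∈ S, s ≠ 0) (hp : p.Prime) (hα : α ≠ 0) :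
    ∃ N : ℕ, N ≠ 0 ∧ p ∣ N ∧
      ∀ s ∈ S, s.factorization p = α → fiberPoly s p ∣ fiberPoly N p := by
  set M := ∏ s ∈ S, ordCompl[p] s
  have hpM : p.Coprime M :=
    Nat.coprime_prod_right_iff.2 fun s hs => Nat.coprime_ordCompl hp (h0 s hs)
  have hM : M ≠ 0 := Finset.prod_ne_zero_iff.2 fun s hs => (Nat.ordCompl_pos p (h0 s hs)).ne'
  have hN : p ^ α * M ≠ 0 := mul_ne_zero (pow_ne_zero _ hp.ne_zero) hM
  refine ⟨p ^ α * M, hN, (dvd_pow_self p hα).mul_right M, ?_⟩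
  rintro s hs rfl
  obtain ⟨k, hk⟩ : ordCompl[p] s ∣ M := Finset.dvd_prod_of_mem (fun s => ordCompl[p] s) hs
  have hsk : ordProj[p] s * M = s * k := by
    rw [hk, ← mul_assoc, Nat.ordProj_mul_ordCompl_eq_self]
  rw [hsk] at hN ⊢
  refine fiberPoly_dvd_fiberPoly_mul hN ?_ (hpM.coprime_dvd_right (hk ▸ dvd_mul_left k _))
  exact Nat.dvd_of_factorization_pos hα

end Construction

section Assignments

variable {A S : Finset ℕ} {σ : ℕ → ℕ}

/-- An assignment function on `S`: a choice of a prime divisor `σ s` of each `s ∈ S`. Only the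
values of `σ` on `S` matter. -/
def IsAssignment (S : Finset ℕ) (σ : ℕ → ℕ) : Prop :=
  ∀ s ∈ S, (σ s).Prime ∧ σ s ∣ s

/-- The exact prime powers `p ^ α ∥ s` with `s ∈ S` and `σ s = p`, encoded as pairs `(p, α)`;
those with a given `p` are counted by `Ecount S σ p`. -/
def assignedPowers (S : Finset ℕ) (σ : ℕ → ℕ) : Finset (ℕ × ℕ) :=
  S.image fun s => (σ s, s.factorization (σ s))

lemma mem_assignedPowers {p α : ℕ} :
    (p, α) ∈ assignedPowers S σ ↔ ∃ s ∈ S, σ s = p ∧ s.factorization p = α := by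
  simp only [assignedPowers, Finset.mem_image, Prod.mk.injEq]
  grind

lemma IsAssignment.prime_and_ne_zero_of_mem_assignedPowers (hσ : IsAssignment S σ)
    (h0 : ∀ s ∈ S, s ≠ 0) : ∀ x ∈ assignedPowers S σ, x.1.Prime ∧ x.2 ≠ 0 := by
  rintro ⟨p, α⟩ hx
  obtain ⟨s, hs, rfl, rfl⟩ := mem_assignedPowers.1 hx
  obtain ⟨hp, hps⟩ := hσ s hs
  exact ⟨hp, (hp.factorization_pos_of_dvd (h0 s hs) hps).ne'⟩

lemma factorization_eq_iff_pow_dvd_and_not_dvd {s p α : ℕ} (hp : p.Prime) (hs : s ≠ 0) :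
    s.factorization p = α ↔ p ^ α ∣ s ∧ ¬ p ^ (α + 1) ∣ s := by
  rw [hp.pow_dvd_iff_le_factorization hs, hp.pow_dvd_iff_le_factorization hs]
  omega

lemma IsAssignment.ecount_eq_card_filter (hσ : IsAssignment S σ) (h0 : ∀ s ∈ S, s ≠ 0) (p : ℕ) :
    Ecount S σ p = {x ∈ assignedPowers S σ | x.1 = p}.card := by
  have hset : {α : ℕ | 1 ≤ α ∧ ∃ s ∈ S, p ^ α ∣ s ∧ ¬ p ^ (α + 1) ∣ s ∧ σ s = p} =
      {α | (p, α) ∈ assignedPowers S σ} := by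
    ext α
    simp only [Set.mem_ofPred_eq, mem_assignedPowers]
    constructor
    · rintro ⟨-, s, hs, hdvd, hndvd, rfl⟩
      exact ⟨s, hs, rfl,
        (factorization_eq_iff_pow_dvd_and_not_dvd (hσ s hs).1 (h0 s hs)).2 ⟨hdvd, hndvd⟩⟩
    · rintro ⟨s, hs, rfl, hα⟩
      obtain ⟨hp, hps⟩ := hσ s hs
      obtain ⟨hdvd, hndvd⟩ := (factorization_eq_iff_pow_dvd_and_not_dvd hp (h0 s hs)).1 hα
      exact ⟨hα ▸ hp.factorization_pos_of_dvd (h0 s hs) hps, s, hs, hdvd, hndvd, rfl⟩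
  have himage : Prod.mk p '' {α | (p, α) ∈ assignedPowers S σ} =
      ({x ∈ assignedPowers S σ | x.1 = p} : Finset (ℕ × ℕ)) := by
    ext ⟨q, α⟩
    simp only [Set.mem_image, Set.mem_ofPred_eq, Finset.mem_coe, Finset.mem_filter, Prod.mk.injEq]
    grind
  rw [Ecount, hset, ← Set.ncard_image_of_injective _ (Prod.mk_right_injective p), himage,
    Set.ncard_coe_finset]

lemma IsAssignment.finprod_pow_ecount (hσ : IsAssignment S σ) (h0 : ∀ s ∈ S, s ≠ 0) :
    ∏ᶠ p : ℕ, p ^ Ecount S σ p = ∏ x ∈ assignedPowers S σ, x.1 := by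
  simp only [hσ.ecount_eq_card_filter h0]
  rw [finprod_eq_prod_of_mulSupport_subset (s := (assignedPowers S σ).image Prod.fst),
    Finset.prod_comp (fun p => p) Prod.fst]
  intro p hp
  contrapose! hp
  have hempty : {x ∈ assignedPowers S σ | x.1 = p} = ∅ := by
    rw [Finset.filter_eq_empty_iff]
    rintro x hx rfl
    exact hp (Finset.mem_image_of_mem _ hx)
  simp [hempty]

lemma IsAssignment.finprod_dvd_card (hσ : IsAssignment S σ) (h0 : ∀ s ∈ S, s ≠ 0)
    (hA : ∀ s ∈ S, fiberPoly s (σ s) ∣ maskPoly A) : ∏ᶠ p : ℕ, p ^ Ecount S σ p ∣ A.card := by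
  rw [hσ.finprod_pow_ecount h0]
  refine prod_fst_dvd_card_of_cyclotomic_dvd (hσ.prime_and_ne_zero_of_mem_assignedPowers h0) ?_
  rintro ⟨p, α⟩ hx
  obtain ⟨s, hs, rfl, rfl⟩ := mem_assignedPowers.1 hx
  exact (cyclotomic_ordProj_dvd_fiberPoly (h0 s hs) (hσ s hs).1 (hσ s hs).2).trans (hA s hs)

lemma IsAssignment.exists_card_eq_finprod (hσ : IsAssignment S σ) (h0 : ∀ s ∈ S, s ≠ 0) :
    ∃ A : Finset ℕ, A.Nonempty ∧ A.card = ∏ᶠ p : ℕ, p ^ Ecount S σ p ∧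
      ∀ s ∈ S, fiberPoly s (σ s) ∣ maskPoly A := by
  have hT := hσ.prime_and_ne_zero_of_mem_assignedPowers h0
  choose! N hN0 hpN hN using fun x hx => exists_common_scale h0 (hT x hx).1 (hT x hx).2
  obtain ⟨A, hcard, hA⟩ := exists_card_eq_prod_and_fiberPoly_dvd_maskPoly hN0 hpN
  refine ⟨A, ?_, by rw [hcard, hσ.finprod_pow_ecount h0], fun s hs => ?_⟩
  · rw [← Finset.card_ne_zero, hcard]
    exact Finset.prod_ne_zero_iff.2 fun x hx => (hT x hx).1.ne_zero
  · have hx : (σ s, s.factorization (σ s)) ∈ assignedPowers S σ :=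
      mem_assignedPowers.2 ⟨s, hs, rfl, rfl⟩
    exact (hN _ hx s hs rfl).trans (hA _ hx)

end Assignments

/-- Proposition 3.2: `FIB(S)` equals the minimum of `∏_p p^{E_p(S,σ)}` over all
assignment functions `σ` (assigning to each `s ∈ S` a prime `σ(s) ∣ s`). -/
theorem fib_eq_min_over_assignments (S : Finset ℕ) (hS : S.Nonempty)
    (h2 : ∀ s ∈ S, 2 ≤ s) :
    FIBs S = sInf {k : ℕ | ∃ σ : ℕ → ℕ, (∀ s ∈ S, (σ s).Prime ∧ σ s ∣ s) ∧
      k = ∏ᶠ p : ℕ, p ^ Ecount S σ p} := by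
  have h0 : ∀ s ∈ S, s ≠ 0 := fun s hs => by have := h2 s hs; omega
  refine csInf_eq_csInf_of_forall_exists_le ?_ ?_
  · rintro _ ⟨A, hA, rfl, hfib⟩
    choose! σ hp hps hdvd using hfib
    have hσ : IsAssignment S σ := fun s hs => ⟨hp s hs, hps s hs⟩
    exact ⟨_, ⟨σ, hσ, rfl⟩, Nat.le_of_dvd hA.card_pos (hσ.finprod_dvd_card h0 hdvd)⟩
  · rintro _ ⟨σ, hσ : IsAssignment S σ, rfl⟩
    obtain ⟨A, hA, hcard, hdvd⟩ := hσ.exists_card_eq_finprod h0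
    exact ⟨_, ⟨A, hA, hcard, fun s hs => ⟨σ s, (hσ s hs).1, (hσ s hs).2, hdvd s hs⟩⟩, le_rfl⟩
end

section
/- Let M = ∏_{i=1}^{K} p_i^{n_i} with p_1, …, p_K distinct primes and n_i ≥ 1, let S be a set of divisors of M each at least 2, and let A : ℤ_M → ℤ be an integer-weighted multiset with Φ_s(X) ∣ A(X) for all s ∈ S. For each i set EXP_i(S) := {α ≥ 1 : ∃ s ∈ S with p_i^α ∥ s} and E_i := #EXP_i(S), and let M' := ∏_{i=1}^{K} p_i^{E_i}. Then there exists A' : ℤ_{M'} → ℤ such that: (i) the total mass of A' equals the total mass of A; (ii) for every N ∈ S, Φ_{N'}(X) ∣ A'(X), where N' := ∏_{i=1}^{K} p_i^{ℓ_i} and ℓ_i := #{β ∈ EXP_i(S) : β ≤ v_{p_i}(N)} with v_{p_i}(N) the p_i-adic valuation of N. Moreover, if A has nonnegative weights and positive total mass, then A' can be taken with nonnegative weights and positive total mass. -/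
open Polynomial

/-- Mask polynomial of an integer-weighted multiset on `ZMod M`:
`A(X) = ∑_{x ∈ ℤ_M} w(x) · X^{x.val}`. -/
noncomputable def zwmaskPoly (M : ℕ) (w : ZMod M → ℤ) : Polynomial ℤ :=
  ∑ i ∈ Finset.range M, C (w (i : ZMod M)) * X ^ i

/-- Total mass `∑_x w(x)` of an integer-weighted multiset on `ZMod M`. -/
def zwmass (M : ℕ) (w : ZMod M → ℤ) : ℤ :=
  ∑ i ∈ Finset.range M, w (i : ZMod M)

/-- The exponent set `EXP_p(S) = {α ≥ 1 : ∃ s ∈ S with p^α ∥ s}`. -/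
def ExpSet (S : Finset ℕ) (p : ℕ) : Set ℕ :=
  {α : ℕ | 1 ≤ α ∧ ∃ s ∈ S, p ^ α ∣ s ∧ ¬ p ^ (α + 1) ∣ s}

/-!
The weight `w'` is the pushforward of `w` along a map `T : ℕ → ℕ` that deletes, for each `i`, the
base-`p i` digits at the positions `β - 1` with `β ∉ EXP_i(S)`. Let `N ∈ S` and let `ζ` be a
primitive `N'`-th root of unity. Adding `N` to `x` does not change `T x` modulo `N'`. Adding
`N / q`, for a prime `q ∣ N`, changes only the highest base-`q` digit that is visible modulo `N'`,
so it shifts `T x` by a constant `e` with `N' ∤ e`. Hence `F x = ζ ^ T x` satisfies `σ ^ N F = F`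
and `σ ^ (N / q) F = ω F` with `ω ≠ 1`, where `σ` is the shift of sequences. In the factorization
of `σ ^ N - 1` into the `Φ_d(σ)` with `d ∣ N`, each factor with `d < N` divides some
`σ ^ (N / q) - 1`, which acts on `F` as the nonzero scalar `ω - 1`; therefore `Φ_N(σ) F = 0`. As
`Φ_N ∣ A`, also `A(σ) F = 0`, and the zeroth term of this sequence is the value at `ζ` of the mask
polynomial of `w'`.
-/

open scoped Finset

theorem aeval_cyclotomic_eq_zero_of_isUnit {A : Type*} [CommRing A] {x : A} {N : ℕ} (hN : N ≠ 0)
    (hx : x ^ N = 1) (hunit : ∀ q : ℕ, q.Prime → q ∣ N → IsUnit (x ^ (N / q) - 1)) :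
    aeval x (cyclotomic N ℤ) = 0 := by
  have proper_isUnit : ∀ d ∈ N.properDivisors, IsUnit (aeval x (cyclotomic d ℤ)) := by
    intro d hd
    obtain ⟨⟨e, rfl⟩, hlt⟩ := Nat.mem_properDivisors.mp hd
    obtain ⟨q, hq, f, rfl⟩ := Nat.exists_prime_and_dvd (n := e) (by rintro rfl; simp at hlt)
    refine isUnit_of_dvd_unit ?_ (hunit q hq ⟨d * f, by ring⟩)
    have hdvd : cyclotomic d ℤ ∣ X ^ (d * (q * f) / q) - 1 := by
      rw [mul_left_comm, Nat.mul_div_cancel_left _ hq.pos, pow_mul]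
      exact (cyclotomic.dvd_X_pow_sub_one d ℤ).trans (sub_one_dvd_pow_sub_one _ f)
    simpa using map_dvd (aeval x) hdvd
  have hprod := congrArg (aeval x) (prod_cyclotomic_eq_X_pow_sub_one (Nat.pos_of_ne_zero hN) ℤ)
  rw [← Nat.cons_self_properDivisors hN, Finset.prod_cons, map_mul, map_prod, map_sub, map_pow,
    aeval_X, map_one, hx, sub_self] at hprod
  exact (IsUnit.prod_iff.mpr proper_isUnit).mul_left_eq_zero.mp hprod

theorem aeval_cyclotomic_smul_eq_zero {A V : Type*} [CommRing A] [AddCommGroup V] [Module A V]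
    {x : A} {v : V} {N : ℕ} (hN : N ≠ 0) (hx : x ^ N • v = v)
    (hunit : ∀ q : ℕ, q.Prime → q ∣ N → ∃ y : A, IsUnit (y - 1) ∧ x ^ (N / q) • v = y • v) :
    aeval x (cyclotomic N ℤ) • v = 0 := by
  let I := Ideal.torsionOf A V v
  have mk_eq_mk {a b : A} (h : a • v = b • v) :
      Ideal.Quotient.mk I a = Ideal.Quotient.mk I b := by
    rw [Ideal.Quotient.eq, Ideal.mem_torsionOf_iff, sub_smul, h, sub_self]
  rw [← Ideal.mem_torsionOf_iff, ← Ideal.Quotient.eq_zero_iff_mem]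
  change (Ideal.Quotient.mk I).toIntAlgHom _ = 0
  rw [← aeval_algHom_apply]
  refine aeval_cyclotomic_eq_zero_of_isUnit hN ?_ fun q hq hqN => ?_
  · simpa using mk_eq_mk (a := x ^ N) (b := 1) (by rw [hx, one_smul])
  · obtain ⟨y, hy, hxy⟩ := hunit q hq hqN
    have hmk := mk_eq_mk hxy
    rw [map_pow] at hmk
    simpa [hmk] using hy.map (Ideal.Quotient.mk I)

theorem funLeft_add_one_pow_apply (R : Type*) {V : Type*} [Semiring R] [AddCommMonoid V]
    [Module R V] (k : ℕ) (F : ℕ → V) :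
    (LinearMap.funLeft R V (· + 1) ^ k) F = fun x => F (x + k) := by
  induction k with
  | zero => rfl
  | succ k ih =>
    rw [pow_succ', Module.End.mul_apply, ih]
    funext x
    simp [LinearMap.funLeft_apply, add_right_comm, add_assoc]

theorem sum_mul_eq_zero_of_cyclotomic_dvd {R : Type*} [CommRing R] {F : ℕ → R} {N : ℕ}
    (hN : N ≠ 0) (hF : Function.Periodic F N)
    (hshift : ∀ q : ℕ, q.Prime → q ∣ N →
      ∃ ω : R, IsUnit (ω - 1) ∧ ∀ x, F (x + N / q) = ω * F x)
    {s : Finset ℕ} {a : ℕ → ℤ} (hdvd : cyclotomic N ℤ ∣ ∑ i ∈ s, C (a i) * X ^ i) :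
    ∑ i ∈ s, (a i : R) * F i = 0 := by
  let σ : Module.End R (ℕ → R) := LinearMap.funLeft R R (· + 1)
  let v : Module.AEval' σ := Module.AEval'.of σ F
  have X_pow_smul (k : ℕ) : (X ^ k : R[X]) • v = Module.AEval'.of σ fun x => F (x + k) := by
    rw [Module.AEval'.X_pow_smul_of, Module.End.smul_def, funLeft_add_one_pow_apply]
  have cyclotomic_smul : aeval (X : R[X]) (cyclotomic N ℤ) • v = 0 := by
    refine aeval_cyclotomic_smul_eq_zero hN ?_ fun q hq hqN => ?_
    · rw [X_pow_smul, funext hF]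
    · obtain ⟨ω, hω, hshiftω⟩ := hshift q hq hqN
      refine ⟨C ω, by simpa using hω.map C, ?_⟩
      rw [X_pow_smul, funext hshiftω, Module.AEval.C_smul]
      rfl
  obtain ⟨Q, hQ⟩ := hdvd
  have sum_smul : (∑ i ∈ s, C (a i : R) * X ^ i) • v = 0 := by
    have hmap := congrArg (aeval (X : R[X])) hQ
    rw [map_mul, mul_comm] at hmap
    have h0 : aeval (X : R[X]) (∑ i ∈ s, C (a i) * X ^ i) • v = 0 := by
      rw [hmap, mul_smul, cyclotomic_smul, smul_zero]
    simpa using h0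
  rw [Finset.sum_smul] at sum_smul
  simp only [mul_smul, X_pow_smul] at sum_smul
  simpa using congrFun (congrArg (Module.AEval'.of σ).symm sum_smul) 0

theorem cyclotomic_dvd_iff_aeval_eq_zero {K : Type*} [Field K] [CharZero K] {ζ : K} {N : ℕ}
    (hζ : IsPrimitiveRoot ζ N) (hN : 0 < N) (P : ℤ[X]) :
    cyclotomic N ℤ ∣ P ↔ aeval ζ P = 0 := by
  rw [cyclotomic_eq_minpoly hζ hN, minpoly.isIntegrallyClosed_dvd_iff (hζ.isIntegral hN)]

theorem cyclotomic_dvd_sum_X_pow_comp {N N' : ℕ} (hN : N ≠ 0) (hN' : N' ≠ 0) {T : ℕ → ℕ}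
    (hperiod : ∀ x, T (x + N) ≡ T x [MOD N'])
    (hshift : ∀ q : ℕ, q.Prime → q ∣ N →
      ∃ e : ℕ, ¬ N' ∣ e ∧ ∀ x, T (x + N / q) ≡ T x + e [MOD N'])
    {s : Finset ℕ} {a : ℕ → ℤ} (hdvd : cyclotomic N ℤ ∣ ∑ i ∈ s, C (a i) * X ^ i) :
    cyclotomic N' ℤ ∣ ∑ i ∈ s, C (a i) * X ^ T i := by
  have hζ := Complex.isPrimitiveRoot_exp N' hN'
  set ζ := Complex.exp (2 * Real.pi * Complex.I / N')
  rw [cyclotomic_dvd_iff_aeval_eq_zero hζ (Nat.pos_of_ne_zero hN')]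
  have hsum : ∑ i ∈ s, (a i : ℂ) * ζ ^ T i = 0 := by
    refine sum_mul_eq_zero_of_cyclotomic_dvd (F := fun x => ζ ^ T x) hN
      (fun x => pow_eq_pow_of_modEq (hperiod x) hζ.pow_eq_one) (fun q hq hqN => ?_) hdvd
    obtain ⟨e, he, hTe⟩ := hshift q hq hqN
    refine ⟨ζ ^ e, ?_, fun x => ?_⟩
    · rwa [isUnit_iff_ne_zero, sub_ne_zero, ne_eq, hζ.pow_eq_one_iff_dvd]
    · simp only [pow_eq_pow_of_modEq (hTe x) hζ.pow_eq_one, pow_add, mul_comm]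
  simpa using hsum

/-- `compressDigits E p x` is the number whose base-`p` digits, lowest first, are the digits of `x`
at the positions `β - 1` for `β ∈ E`, in increasing order. The elements of `E` stand for exponents
`β ≥ 1` of exact prime powers, hence the shift by one. -/
def compressDigits (E : Finset ℕ) (p x : ℕ) : ℕ :=
  ∑ β ∈ E, x / p ^ (β - 1) % p * p ^ #{γ ∈ E | γ < β}

theorem add_div_pow_pred_mod_of_pow_dvd {p β d : ℕ} (hβ : 0 < β) (hd : p ^ β ∣ d) (x : ℕ) :
    (x + d) / p ^ (β - 1) % p = x / p ^ (β - 1) % p := by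
  obtain ⟨e, rfl⟩ := hd
  obtain ⟨b, rfl⟩ := Nat.exists_eq_add_one.mpr hβ
  rcases p.eq_zero_or_pos with rfl | hp
  · simp
  · rw [Nat.add_sub_cancel, pow_succ, mul_assoc, Nat.add_mul_div_left _ _ (pow_pos hp b),
      Nat.add_mul_mod_self_left]

theorem card_filter_le_eq_card_filter_lt_add_one {E : Finset ℕ} {a : ℕ} (ha : a ∈ E) :
    #{γ ∈ E | γ ≤ a} = #{γ ∈ E | γ < a} + 1 := by
  have hinsert : {γ ∈ E | γ ≤ a} = insert a {γ ∈ E | γ < a} := by grind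
  rw [hinsert, Finset.card_insert_of_notMem (by simp)]

theorem digit_mul_pow_modEq {E : Finset ℕ} {p a β d : ℕ} (hβ : 0 < β)
    (hd : p ^ β ∣ d ∨ a < β) (x : ℕ) :
    (x + d) / p ^ (β - 1) % p * p ^ #{γ ∈ E | γ < β} ≡
      x / p ^ (β - 1) % p * p ^ #{γ ∈ E | γ < β} [MOD p ^ #{γ ∈ E | γ ≤ a}] := by
  rcases hd with hd | hlt
  · rw [add_div_pow_pred_mod_of_pow_dvd hβ hd]
  · have hdvd : p ^ #{γ ∈ E | γ ≤ a} ∣ p ^ #{γ ∈ E | γ < β} :=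
      pow_dvd_pow p <| Finset.card_le_card <|
        Finset.monotone_filter_right E fun _ _ hγ => hγ.trans_lt hlt
    have hzero (m : ℕ) : m * p ^ #{γ ∈ E | γ < β} ≡ 0 [MOD p ^ #{γ ∈ E | γ ≤ a}] :=
      Nat.modEq_zero_iff_dvd.mpr (hdvd.mul_left m)
    exact (hzero _).trans (hzero _).symm

theorem compressDigits_add_modEq {E : Finset ℕ} (hE : ∀ β ∈ E, 0 < β) {p a d : ℕ}
    (hd : p ^ a ∣ d) (x : ℕ) :
    compressDigits E p (x + d) ≡ compressDigits E p x [MOD p ^ #{γ ∈ E | γ ≤ a}] := by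
  refine Nat.ModEq.sum fun β hβ => digit_mul_pow_modEq (hE β hβ) ?_ x
  exact (le_or_gt β a).imp_left fun hle => (pow_dvd_pow p hle).trans hd

theorem compressDigits_add_pow_pred_mul_modEq {E : Finset ℕ} (hE : ∀ β ∈ E, 0 < β) {p a : ℕ}
    (hp : 0 < p) (ha : a ∈ E) (c x : ℕ) :
    compressDigits E p (x + p ^ (a - 1) * c) ≡
      compressDigits E p x + p ^ #{γ ∈ E | γ < a} * c [MOD p ^ #{γ ∈ E | γ ≤ a}] := by
  have digit_shift : (x + p ^ (a - 1) * c) / p ^ (a - 1) % p * p ^ #{γ ∈ E | γ < a} ≡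
      x / p ^ (a - 1) % p * p ^ #{γ ∈ E | γ < a} + p ^ #{γ ∈ E | γ < a} * c
        [MOD p ^ #{γ ∈ E | γ ≤ a}] := by
    rw [Nat.add_mul_div_left _ _ (pow_pos hp _), mul_comm _ c, ← add_mul,
      card_filter_le_eq_card_filter_lt_add_one ha, pow_succ']
    exact ((Nat.mod_modEq _ p).trans ((Nat.mod_modEq _ p).symm.add_right c)).mul_right' _
  have other_digits : ∑ β ∈ E.erase a,
        (x + p ^ (a - 1) * c) / p ^ (β - 1) % p * p ^ #{γ ∈ E | γ < β} ≡
      ∑ β ∈ E.erase a, x / p ^ (β - 1) % p * p ^ #{γ ∈ E | γ < β}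
        [MOD p ^ #{γ ∈ E | γ ≤ a}] := by
    refine Nat.ModEq.sum fun β hβ => ?_
    obtain ⟨hne, hβE⟩ := Finset.mem_erase.mp hβ
    refine digit_mul_pow_modEq (hE β hβE) (hne.lt_or_gt.imp_left fun hlt => ?_) x
    exact (pow_dvd_pow p (Nat.le_pred_of_lt hlt)).trans (dvd_mul_right _ _)
  unfold compressDigits
  rw [← Finset.add_sum_erase E _ ha, ← Finset.add_sum_erase E _ ha, add_right_comm]
  exact digit_shift.add other_digits

section MixedRadix

variable {ι : Type*} [Fintype ι] {p : ι → ℕ} {E : ι → Finset ℕ}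

/-- The divisor `N'` of the truncated modulus that corresponds to `N`: for each `i`, the exponent of
`p i` in `N` is replaced by the number of elements of `E i` that do not exceed it. -/
def truncatedDivisor (p : ι → ℕ) (E : ι → Finset ℕ) (N : ℕ) : ℕ :=
  ∏ i, p i ^ #{β ∈ E i | β ≤ N.factorization (p i)}

theorem truncatedDivisor_dvd_prod (p : ι → ℕ) (E : ι → Finset ℕ) (N : ℕ) :
    truncatedDivisor p E N ∣ ∏ i, p i ^ #(E i) :=
  Finset.prod_dvd_prod_of_dvd _ _ fun _ _ => pow_dvd_pow _ (Finset.card_filter_le _ _)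

variable [DecidableEq ι]

/-- The factor of `∏ j, p j ^ #(E j)` complementary to `p i ^ #(E i)`. -/
def truncationCofactor (p : ι → ℕ) (E : ι → Finset ℕ) (i : ι) : ℕ :=
  ∏ j ∈ Finset.univ.erase i, p j ^ #(E j)

/-- The map along which weights are truncated: for each `i`, keep the base-`p i` digits selected by
`E i`. The terms need not be combined by the Chinese remainder theorem: it is enough that the
`i`-th weight is prime to `p i` and divisible by `p j ^ #(E j)` for all `j ≠ i`. -/
def truncationMap (p : ι → ℕ) (E : ι → Finset ℕ) (x : ℕ) : ℕ :=
  ∑ i, truncationCofactor p E i * compressDigits (E i) (p i) x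

theorem truncatedDivisor_dvd_truncationCofactor_mul (p : ι → ℕ) (E : ι → Finset ℕ) (N : ℕ) (i : ι) :
    truncatedDivisor p E N ∣
      truncationCofactor p E i * p i ^ #{β ∈ E i | β ≤ N.factorization (p i)} := by
  rw [truncatedDivisor, ← Finset.prod_erase_mul _ _ (Finset.mem_univ i)]
  exact mul_dvd_mul_right (Finset.prod_dvd_prod_of_dvd _ _ fun _ _ =>
    pow_dvd_pow _ (Finset.card_filter_le _ _)) _

theorem truncationMap_modEq {N x y : ℕ} (e : ι → ℕ)
    (h : ∀ i, compressDigits (E i) (p i) y ≡ compressDigits (E i) (p i) x + e i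
      [MOD p i ^ #{β ∈ E i | β ≤ N.factorization (p i)}]) :
    truncationMap p E y ≡ truncationMap p E x + ∑ i, truncationCofactor p E i * e i
      [MOD truncatedDivisor p E N] := by
  simp only [truncationMap, ← Finset.sum_add_distrib, ← mul_add]
  exact Nat.ModEq.sum fun i _ =>
    ((h i).mul_left' _).of_dvd (truncatedDivisor_dvd_truncationCofactor_mul p E N i)

theorem truncationMap_add_self_modEq (hE : ∀ i, ∀ β ∈ E i, 0 < β) (N x : ℕ) :
    truncationMap p E (x + N) ≡ truncationMap p E x [MOD truncatedDivisor p E N] := by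
  simpa using truncationMap_modEq (fun _ => 0) fun i =>
    compressDigits_add_modEq (hE i) (Nat.ordProj_dvd N (p i)) x

theorem truncationMap_add_div_modEq (hp : ∀ i, (p i).Prime) (hinj : Function.Injective p)
    (hE : ∀ i, ∀ β ∈ E i, 0 < β) {N : ℕ} {i : ι} (hiN : p i ∣ N)
    (hi : N.factorization (p i) ∈ E i) (x : ℕ) :
    truncationMap p E (x + N / p i) ≡ truncationMap p E x + truncationCofactor p E i *
      (p i ^ #{β ∈ E i | β < N.factorization (p i)} * ordCompl[p i] N)
      [MOD truncatedDivisor p E N] := by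
  have hdiv : N / p i = p i ^ (N.factorization (p i) - 1) * ordCompl[p i] N := by
    refine Nat.div_eq_of_eq_mul_right (hp i).pos ?_
    rw [← mul_assoc, mul_pow_sub_one (hE i _ hi).ne', Nat.ordProj_mul_ordCompl_eq_self]
  have pow_dvd_div {j : ι} (hji : j ≠ i) : p j ^ N.factorization (p j) ∣ N / p i := by
    have hcop : (p j ^ N.factorization (p j)).Coprime (p i) :=
      .pow_left _ ((Nat.coprime_primes (hp j) (hp i)).mpr (hinj.ne hji))
    refine hcop.dvd_of_dvd_mul_left ?_
    rw [Nat.mul_div_cancel' hiN]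
    exact Nat.ordProj_dvd N (p j)
  have hmod := truncationMap_modEq (p := p) (E := E) (N := N) (x := x) (y := x + N / p i)
    (Pi.single i (p i ^ #{β ∈ E i | β < N.factorization (p i)} * ordCompl[p i] N)) fun j => by
      obtain rfl | hji := eq_or_ne j i
      · rw [Pi.single_eq_same, hdiv]
        exact compressDigits_add_pow_pred_mul_modEq (hE j) (hp j).pos hi _ x
      · rw [Pi.single_eq_of_ne hji]
        exact compressDigits_add_modEq (hE j) (pow_dvd_div hji) x
  simpa [Pi.single_apply] using hmod

theorem not_truncatedDivisor_dvd (hp : ∀ i, (p i).Prime) (hinj : Function.Injective p)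
    {N : ℕ} (hN : N ≠ 0) {i : ι} (hi : N.factorization (p i) ∈ E i) :
    ¬ truncatedDivisor p E N ∣ truncationCofactor p E i *
      (p i ^ #{β ∈ E i | β < N.factorization (p i)} * ordCompl[p i] N) := by
  intro hdvd
  have hcop : (p i).Coprime (truncationCofactor p E i) :=
    Nat.Coprime.prod_right fun j hj => Nat.Coprime.pow_right _ <|
      (Nat.coprime_primes (hp i) (hp j)).mpr (hinj.ne (Finset.ne_of_mem_erase hj).symm)
  have hpow : p i ^ (#{β ∈ E i | β < N.factorization (p i)} + 1) ∣
      p i ^ #{β ∈ E i | β < N.factorization (p i)} * ordCompl[p i] N := by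
    rw [← card_filter_le_eq_card_filter_lt_add_one hi]
    exact (hcop.pow_left _).dvd_of_dvd_mul_left
      ((Finset.dvd_prod_of_mem _ (Finset.mem_univ i)).trans hdvd)
  rw [pow_succ, Nat.mul_dvd_mul_iff_left (pow_pos (hp i).pos _)] at hpow
  exact Nat.not_dvd_ordCompl (hp i) hN hpow

theorem cyclotomic_truncatedDivisor_dvd (hp : ∀ i, (p i).Prime) (hinj : Function.Injective p)
    (hE : ∀ i, ∀ β ∈ E i, 0 < β) {N : ℕ} (hN : N ≠ 0)
    (hNp : (N.primeFactors : Set ℕ) ⊆ Set.range p)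
    (hNE : ∀ i, p i ∣ N → N.factorization (p i) ∈ E i) {s : Finset ℕ} {a : ℕ → ℤ}
    (hdvd : cyclotomic N ℤ ∣ ∑ x ∈ s, C (a x) * X ^ x) :
    cyclotomic (truncatedDivisor p E N) ℤ ∣ ∑ x ∈ s, C (a x) * X ^ truncationMap p E x := by
  have hN' : truncatedDivisor p E N ≠ 0 :=
    Finset.prod_ne_zero_iff.mpr fun i _ => pow_ne_zero _ (hp i).ne_zero
  refine cyclotomic_dvd_sum_X_pow_comp hN hN' (truncationMap_add_self_modEq hE N)
    (fun q hq hqN => ?_) hdvd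
  obtain ⟨i, rfl⟩ := hNp (Nat.mem_primeFactors.mpr ⟨hq, hqN, hN⟩)
  exact ⟨_, not_truncatedDivisor_dvd hp hinj hN (hNE i hqN),
    truncationMap_add_div_modEq hp hinj hE hqN (hNE i hqN)⟩

end MixedRadix

/-- The pushforward to `ZMod M'` of the weight `w` on `ZMod M` along `T : ℕ → ℕ`, evaluated on the
representatives `0, …, M - 1`; `T` need not respect congruence modulo `M`. -/
def pushWeight {M : ℕ} (M' : ℕ) (T : ℕ → ℕ) (w : ZMod M → ℤ) (y : ZMod M') : ℤ :=
  ∑ x ∈ Finset.range M with (T x : ZMod M') = y, w x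

theorem zwmaskPoly_pushWeight {M M' : ℕ} (hM' : 0 < M') (T : ℕ → ℕ) (w : ZMod M → ℤ) :
    zwmaskPoly M' (pushWeight M' T w) =
      ∑ x ∈ Finset.range M, C (w x) * X ^ (T x % M') := by
  rw [← Finset.sum_fiberwise_of_maps_to (t := Finset.range M') (g := fun x => T x % M')
    fun x _ => Finset.mem_range.mpr (Nat.mod_lt _ hM')]
  refine Finset.sum_congr rfl fun y hy => ?_
  have fiber_iff (x : ℕ) : (T x : ZMod M') = y ↔ T x % M' = y := by
    rw [ZMod.natCast_eq_natCast_iff', Nat.mod_eq_of_lt (Finset.mem_range.mp hy)]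
  simp only [pushWeight, fiber_iff, map_sum, Finset.sum_mul]
  exact Finset.sum_congr rfl fun x hx => by rw [(Finset.mem_filter.mp hx).2]

theorem eval_one_zwmaskPoly (M : ℕ) (w : ZMod M → ℤ) :
    (zwmaskPoly M w).eval 1 = zwmass M w := by
  simp [zwmaskPoly, zwmass, eval_finsetSum]

theorem zwmass_pushWeight {M M' : ℕ} (hM' : 0 < M') (T : ℕ → ℕ) (w : ZMod M → ℤ) :
    zwmass M' (pushWeight M' T w) = zwmass M w := by
  rw [← eval_one_zwmaskPoly, zwmaskPoly_pushWeight hM']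
  simp [zwmass, eval_finsetSum]

theorem pushWeight_nonneg {M M' : ℕ} {T : ℕ → ℕ} {w : ZMod M → ℤ} (hw : ∀ x, 0 ≤ w x)
    (y : ZMod M') : 0 ≤ pushWeight M' T w y :=
  Finset.sum_nonneg fun _ _ => hw _

theorem cyclotomic_dvd_zwmaskPoly_pushWeight {M M' N : ℕ} (hM' : 0 < M') (hN : N ∣ M')
    {T : ℕ → ℕ} {w : ZMod M → ℤ}
    (hdvd : cyclotomic N ℤ ∣ ∑ x ∈ Finset.range M, C (w x) * X ^ T x) :
    cyclotomic N ℤ ∣ zwmaskPoly M' (pushWeight M' T w) := by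
  have hNpos : 0 < N := Nat.pos_of_dvd_of_pos hN hM'
  have hζ := Complex.isPrimitiveRoot_exp N hNpos.ne'
  rw [zwmaskPoly_pushWeight hM']
  rw [cyclotomic_dvd_iff_aeval_eq_zero hζ hNpos] at hdvd ⊢
  have pow_mod (m : ℕ) := pow_eq_pow_of_modEq ((Nat.mod_modEq m M').of_dvd hN) hζ.pow_eq_one
  simpa only [map_sum, map_mul, map_pow, aeval_X, pow_mod] using hdvd

/-- The positive `p`-adic valuations of the elements of `S`. -/
def positiveValuations (S : Finset ℕ) (p : ℕ) : Finset ℕ :=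
  (S.image fun s => s.factorization p).erase 0

theorem coe_positiveValuations (S : Finset ℕ) {p : ℕ} (hp : p.Prime) :
    (positiveValuations S p : Set ℕ) = ExpSet S p := by
  have exact_iff {α s : ℕ} (hα : 1 ≤ α) :
      p ^ α ∣ s ∧ ¬ p ^ (α + 1) ∣ s ↔ s.factorization p = α := by
    rcases eq_or_ne s 0 with rfl | hs
    · simp; omega
    · rw [hp.pow_dvd_iff_le_factorization hs, hp.pow_dvd_iff_le_factorization hs]
      omega
  ext α
  rw [Finset.mem_coe, positiveValuations, Finset.mem_erase, Finset.mem_image,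
    ← Nat.one_le_iff_ne_zero]
  exact and_congr_right fun hα => exists_congr fun s => and_congr_right fun _ =>
    (exact_iff hα).symm

theorem primeFactors_subset_range_of_dvd_prod_pow {ι : Type*} [Fintype ι] {p n : ι → ℕ}
    (hp : ∀ i, (p i).Prime) {s : ℕ} (hs : s ∣ ∏ i, p i ^ n i) :
    (s.primeFactors : Set ℕ) ⊆ Set.range p := by
  intro q hq
  obtain ⟨hq, hqs, -⟩ := Nat.mem_primeFactors.mp hq
  obtain ⟨i, -, hi⟩ := (hq.prime.dvd_finsetProd_iff _).mp (hqs.trans hs)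
  exact ⟨i, ((Nat.prime_dvd_prime_iff_eq hq (hp i)).mp (hq.dvd_of_dvd_pow hi)).symm⟩

theorem truncation_general {ι : Type*} [Fintype ι] {p : ι → ℕ} (hp : ∀ i, (p i).Prime)
    (hinj : Function.Injective p) {M : ℕ} {S : Finset ℕ}
    (hS : ∀ s ∈ S, s ≠ 0 ∧ (s.primeFactors : Set ℕ) ⊆ Set.range p) {w : ZMod M → ℤ}
    (hdvd : ∀ s ∈ S, cyclotomic s ℤ ∣ zwmaskPoly M w) {M' : ℕ}
    (hM' : M' = ∏ i, p i ^ Set.ncard (ExpSet S (p i))) :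
    ∃ w' : ZMod M' → ℤ,
      zwmass M' w' = zwmass M w ∧
      (∀ N ∈ S, cyclotomic
          (∏ i, p i ^ Set.ncard {β ∈ ExpSet S (p i) | β ≤ N.factorization (p i)}) ℤ ∣
        zwmaskPoly M' w') ∧
      ((∀ x, 0 ≤ w x) → 0 < zwmass M w → ((∀ x, 0 ≤ w' x) ∧ 0 < zwmass M' w')) := by
  classical
  let E : ι → Finset ℕ := fun i => positiveValuations S (p i)
  have ncard_E (i : ι) : Set.ncard (ExpSet S (p i)) = #(E i) := by
    rw [← coe_positiveValuations S (hp i), Set.ncard_coe_finset]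
  have ncard_E_le (i : ι) (a : ℕ) :
      Set.ncard {β ∈ ExpSet S (p i) | β ≤ a} = #{β ∈ E i | β ≤ a} := by
    rw [← coe_positiveValuations S (hp i), ← Set.ncard_coe_finset, Finset.coe_filter]
    rfl
  have E_pos (i : ι) : ∀ β ∈ E i, 0 < β := fun β hβ =>
    Nat.pos_of_ne_zero (Finset.ne_of_mem_erase hβ)
  simp only [ncard_E] at hM'
  simp only [ncard_E_le]
  have hM'pos : 0 < M' := hM' ▸ Finset.prod_pos fun i _ => pow_pos (hp i).pos _
  refine ⟨pushWeight M' (truncationMap p E) w, zwmass_pushWeight hM'pos _ w, fun N hN => ?_,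
    fun hw hpos => ⟨pushWeight_nonneg hw, by rwa [zwmass_pushWeight hM'pos]⟩⟩
  obtain ⟨hN0, hNp⟩ := hS N hN
  have factorization_mem (i : ι) (hi : p i ∣ N) : N.factorization (p i) ∈ E i :=
    Finset.mem_erase.mpr ⟨((hp i).factorization_pos_of_dvd hN0 hi).ne',
      Finset.mem_image_of_mem _ hN⟩
  exact cyclotomic_dvd_zwmaskPoly_pushWeight hM'pos (hM' ▸ truncatedDivisor_dvd_prod p E N)
    (cyclotomic_truncatedDivisor_dvd hp hinj E_pos hN0 hNp factorization_mem (hdvd N hN))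

/-- Proposition 4.1 (Truncations). -/
theorem truncation (K : ℕ) (p n : Fin K → ℕ) (hp : ∀ i, (p i).Prime)
    (hn : ∀ i, 1 ≤ n i) (hinj : Function.Injective p)
    (M : ℕ) (hM : M = ∏ i, p i ^ n i)
    (S : Finset ℕ) (hSdvd : ∀ s ∈ S, s ∣ M ∧ 2 ≤ s)
    (w : ZMod M → ℤ)
    (hdvd : ∀ s ∈ S, cyclotomic s ℤ ∣ zwmaskPoly M w)
    (M' : ℕ) (hM' : M' = ∏ i, p i ^ Set.ncard (ExpSet S (p i))) :
    ∃ w' : ZMod M' → ℤ,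
      zwmass M' w' = zwmass M w ∧
      (∀ N ∈ S, cyclotomic
          (∏ i, p i ^ Set.ncard {β ∈ ExpSet S (p i) | β ≤ N.factorization (p i)}) ℤ ∣
        zwmaskPoly M' w') ∧
      ((∀ x, 0 ≤ w x) → 0 < zwmass M w → ((∀ x, 0 ≤ w' x) ∧ 0 < zwmass M' w')) :=
  truncation_general hp hinj (fun s hs => ⟨(two_pos.trans_le (hSdvd s hs).2).ne',
    primeFactors_subset_range_of_dvd_prod_pow hp (hM ▸ (hSdvd s hs).1)⟩) hdvd hM'
end

section
/- Let M = ∏_{i=1}^{K} p_i^{n_i} with p_1, …, p_K distinct primes and n_i ≥ 1, and let 1 ≤ α_i ≤ n_i for each i; set N := ∏_{i=1}^{K} p_i^{n_i − α_i + 1}. Let A : ℤ_M → ℤ be an integer-weighted multiset such that Φ_L(X) ∣ A(X) for every L with N ∣ L ∣ M. Then there exist polynomials P_1, …, P_K ∈ ℤ[X] such that A(X) ≡ P_1(X)·F_{1,α_1}(X) + ⋯ + P_K(X)·F_{K,α_K}(X) (mod X^M − 1), where F_{i,α}(X) := ∑_{j=0}^{p_i^α − 1} X^{j·M/p_i^α}.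 Moreover, if K = 2 and A has nonnegative weights, then P_1 and P_2 may be chosen with nonnegative coefficients. -/
open Polynomial

/-- The long fiber polynomial `F_{q,α}(X) = ∑_{j=0}^{q^α - 1} X^{j·M/q^α}`. -/
noncomputable def longFiber (M q α : ℕ) : Polynomial ℤ :=
  ∑ j ∈ Finset.range (q ^ α), X ^ (j * (M / q ^ α))

/-!
Two cyclotomic polynomials `Φ_m`, `Φ_n` with neither index dividing the other generate the unit
ideal over `ℤ`: with `g = gcd(m, n)`, cancel `X ^ g - 1` from a Bézout identity for `X ^ m - 1` and
`X ^ n - 1`. The long fiber `F_{i,α_i}` is the product of the `Φ_L`, `L ∣ M`, with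
`p_i ^ (n_i - α_i + 1) ∣ L`, and adjoining one prime at a time the coprimality shows that the
product of the `Φ_L` over `N ∣ L ∣ M` lies in the ideal generated by the long fibers and
`X ^ M - 1`. This product divides `A`.

On `ℤ_M`, a multiple of `F_{i,α}` is a function of period `M / p_i ^ α`. If a sum `f + g` of two
periodic functions is nonnegative, then subtracting from `g`, and adding to `f`, the infimum of `g`
over the orbits of the period of `f` makes both summands nonnegative and preserves both periods.
-/

lemma factorization_prod_prime_pow {ι : Type*} [Fintype ι] {p : ι → ℕ} (hp : ∀ i, (p i).Prime)
    (hinj : Function.Injective p) (n : ι → ℕ) (i : ι) :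
    (∏ j, p j ^ n j).factorization (p i) = n i := by
  classical
  rw [Nat.factorization_prod_apply fun j _ => pow_ne_zero _ (hp j).ne_zero]
  simp [(hp _).factorization_pow, Finsupp.single_apply, hinj.eq_iff]

lemma pow_mul_dvd_iff_not_pow_dvd {p α d M : ℕ} (hp : p.Prime) (hM : M ≠ 0)
    (hα : α ≤ M.factorization p) (hd : d ∣ M) :
    p ^ α * d ∣ M ↔ ¬p ^ (M.factorization p - α + 1) ∣ d := by
  obtain ⟨c, rfl⟩ := hd
  obtain ⟨hd, hc⟩ := mul_ne_zero_iff.1 hM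
  rw [Nat.factorization_mul hd hc, Finsupp.add_apply] at hα ⊢
  rw [mul_comm d, Nat.mul_dvd_mul_iff_right hd.bot_lt, hp.pow_dvd_iff_le_factorization hc,
    hp.pow_dvd_iff_le_factorization hd]
  lia

lemma sum_range_mul {A : Type*} [AddCommMonoid A] (f : ℕ → A) (m n : ℕ) :
    ∑ i ∈ Finset.range (m * n), f i =
      ∑ j ∈ Finset.range m, ∑ a ∈ Finset.range n, f (j * n + a) := by
  induction m with
  | zero => simp
  | succ m ih => rw [add_mul, one_mul, Finset.sum_range_add, Finset.sum_range_succ, ih]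

theorem exists_nonneg_periodic_add_eq {G A : Type*} [AddCommGroup G] [AddCommGroup A]
    [ConditionallyCompleteLattice A] [IsOrderedAddMonoid A] {f g : G → A} {a b : G}
    (hf : Function.Periodic f a) (hg : Function.Periodic g b) (hfg : 0 ≤ f + g) :
    ∃ f' g', Function.Periodic f' a ∧ Function.Periodic g' b ∧ 0 ≤ f' ∧ 0 ≤ g' ∧
      f' + g' = f + g := by
  let u : G → A := fun x => ⨅ k : ℤ, g (x + k • a)
  have neg_le (x : G) (k : ℤ) : -f x ≤ g (x + k • a) := by
    have := hfg (x + k • a)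
    rwa [Pi.add_apply, hf.zsmul k, Pi.zero_apply, ← neg_le_iff_add_nonneg'] at this
  have hua : Function.Periodic u a := fun x => by
    have := (Equiv.addRight (1 : ℤ)).iInf_comp (g := fun k : ℤ => g (x + k • a))
    simpa only [u, Equiv.coe_addRight, add_smul, one_smul, add_assoc, add_comm a] using this
  have hub : Function.Periodic u b := fun x => by simp only [u, add_right_comm x b, hg _]
  refine ⟨f + u, g - u, hf.add hua, hg.sub hub, fun x => ?_, fun x => ?_, by abel⟩
  · exact neg_le_iff_add_nonneg'.1 (le_ciInf (neg_le x))
  · have : u x ≤ g (x + (0 : ℤ) • a) := ciInf_le ⟨-f x, Set.forall_mem_range.2 (neg_le x)⟩ 0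
    simpa using this

section Cyclotomic

variable {R : Type*} [CommRing R]

lemma monic_X_pow_sub_one {n : ℕ} (hn : n ≠ 0) : (X ^ n - 1 : R[X]).Monic := by
  simpa only [map_one] using monic_X_pow_sub_C (1 : R) hn

lemma pow_gcd_sub_one_mem_span (x : R) (m n : ℕ) :
    x ^ m.gcd n - 1 ∈ Ideal.span {x ^ m - 1, x ^ n - 1} := by
  set I : Ideal R := Ideal.span {x ^ m - 1, x ^ n - 1}
  have pow_eq_one {k : ℕ} : x ^ k - 1 ∈ I ↔ Ideal.Quotient.mk I x ^ k = 1 := by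
    rw [← Ideal.Quotient.eq_zero_iff_mem, map_sub, map_pow, map_one, sub_eq_zero]
  rw [pow_eq_one, pow_gcd_eq_one, ← pow_eq_one, ← pow_eq_one]
  exact ⟨Ideal.subset_span (by simp), Ideal.subset_span (by simp)⟩

theorem isCoprime_cyclotomic_of_not_dvd {m n : ℕ} (hmn : ¬m ∣ n) (hnm : ¬n ∣ m) :
    IsCoprime (cyclotomic m R) (cyclotomic n R) := by
  have hm : m ≠ 0 := by rintro rfl; exact hnm (dvd_zero n)
  have hn : n ≠ 0 := by rintro rfl; exact hmn (dvd_zero m)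
  set g := m.gcd n
  have hgm : g ∈ m.properDivisors := Nat.mem_properDivisors.2
    ⟨m.gcd_dvd_left n, (Nat.gcd_le_left n hm.bot_lt).lt_of_ne (mt Nat.gcd_eq_left_iff_dvd.1 hmn)⟩
  have hgn : g ∈ n.properDivisors := Nat.mem_properDivisors.2
    ⟨m.gcd_dvd_right n, (Nat.gcd_le_right m hn.bot_lt).lt_of_ne (mt Nat.gcd_eq_right_iff_dvd.1 hnm)⟩
  obtain ⟨u, hu⟩ := X_pow_sub_one_mul_cyclotomic_dvd_X_pow_sub_one_of_dvd R hgm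
  obtain ⟨v, hv⟩ := X_pow_sub_one_mul_cyclotomic_dvd_X_pow_sub_one_of_dvd R hgn
  obtain ⟨a, b, hab⟩ := Ideal.mem_span_pair.1 (pow_gcd_sub_one_mem_span (X : R[X]) m n)
  have hg : g ≠ 0 := Nat.gcd_ne_zero_left hm
  refine ⟨a * u, b * v, (monic_X_pow_sub_one hg).isRegular.left ?_⟩
  change (X ^ g - 1) * (a * u * cyclotomic m R + b * v * cyclotomic n R) = (X ^ g - 1) * 1
  linear_combination hab - a * hu - b * hv

theorem prod_cyclotomic_dvd_s11 {s : Finset ℕ} {B : ℤ[X]} (h : ∀ L ∈ s, cyclotomic L ℤ ∣ B) :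
    ∏ L ∈ s, cyclotomic L ℤ ∣ B := by
  have hmonic : (∏ L ∈ s, cyclotomic L ℤ).Monic :=
    monic_prod_of_monic _ _ fun L _ => cyclotomic.monic L ℤ
  rw [← map_dvd_map (Int.castRingHom ℚ) Int.cast_injective hmonic, Polynomial.map_prod]
  refine Finset.prod_dvd_of_coprime (fun a _ b _ hab => ?_) fun L hL =>
    Polynomial.map_dvd _ (h L hL)
  simpa only [Function.onFun, map_cyclotomic] using cyclotomic.isCoprime_rat hab

theorem prod_filter_forall_mem_span {ι β : Type*} (f : β → R) (D : Finset β) (P : ι → β → Prop)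
    [∀ i, DecidablePred (P i)]
    (hf : ∀ i j, ∀ x ∈ D, ∀ y ∈ D, P i x → ¬P j x → P j y → ¬P i y → IsCoprime (f x) (f y))
    (s : Finset ι) :
    ∏ x ∈ D with ∀ i ∈ s, P i x, f x ∈
      Ideal.span (insert (∏ x ∈ D, f x) (Set.range fun i => ∏ x ∈ D with P i x, f x)) := by
  classical
  induction s using Finset.induction_on with
  | empty => exact Ideal.subset_span (by simp)
  | insert k s _ ih =>
    have split (p q : β → Prop) [DecidablePred p] [DecidablePred q] :
        ∏ x ∈ D with p x, f x = (∏ x ∈ D with p x ∧ q x, f x) * ∏ x ∈ D with p x ∧ ¬q x, f x := by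
      rw [← Finset.filter_filter, ← Finset.filter_filter, Finset.prod_filter_mul_prod_filter_not]
    have hcop : IsCoprime (∏ x ∈ D with (∀ i ∈ s, P i x) ∧ ¬P k x, f x)
        (∏ x ∈ D with P k x ∧ ¬∀ i ∈ s, P i x, f x) := by
      refine .prod_left fun x hx => .prod_right fun y hy => ?_
      simp only [Finset.mem_filter, not_forall] at hx hy
      obtain ⟨hxD, hxs, hxk⟩ := hx
      obtain ⟨hyD, hyk, i, his, hyi⟩ := hy
      exact hf i k x hxD y hyD (hxs i his) hxk hyk hyi
    obtain ⟨a, b, hab⟩ := hcop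
    have hk : ∏ x ∈ D with P k x, f x ∈ Ideal.span (insert (∏ x ∈ D, f x)
        (Set.range fun i => ∏ x ∈ D with P i x, f x)) := Ideal.subset_span (by simp)
    convert add_mem (Ideal.mul_mem_left _ a ih) (Ideal.mul_mem_left _ b hk) using 1
    rw [split (fun x => ∀ i ∈ s, P i x) (P k), split (P k) (fun x => ∀ i ∈ s, P i x)]
    simp only [Finset.forall_mem_insert, and_comm (a := P k _) (b := ∀ i ∈ s, P i _)]
    linear_combination -(∏ x ∈ D with (∀ i ∈ s, P i x) ∧ P k x, f x) * hab

end Cyclotomic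

section LongFiber

variable {M : ℕ}

lemma longFiber_mul_X_pow_sub_one {q α : ℕ} (h : q ^ α ∣ M) :
    longFiber M q α * (X ^ (M / q ^ α) - 1) = X ^ M - 1 := by
  simp only [longFiber, mul_comm _ (M / q ^ α), pow_mul]
  rw [geom_sum_mul, ← pow_mul, Nat.div_mul_cancel h]

theorem longFiber_eq_prod_cyclotomic {p α : ℕ} (hp : p.Prime) (hM : M ≠ 0)
    (hα : α ≤ M.factorization p) :
    longFiber M p α =
      ∏ L ∈ M.divisors with p ^ (M.factorization p - α + 1) ∣ L, cyclotomic L ℤ := by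
  have hdvd : p ^ α ∣ M := (hp.pow_dvd_iff_le_factorization hM).2 hα
  have hdiv : M / p ^ α ≠ 0 := (Nat.div_pos (Nat.le_of_dvd hM.bot_lt hdvd) (pow_pos hp.pos α)).ne'
  have hdivisors : {L ∈ M.divisors | p ^ (M.factorization p - α + 1) ∣ L} =
      M.divisors \ (M / p ^ α).divisors := by
    ext L
    simp only [Finset.mem_filter, Finset.mem_sdiff, Nat.mem_divisors, and_congr_right_iff]
    rintro ⟨hL, -⟩
    simp only [Nat.dvd_div_iff_mul_dvd hdvd, pow_mul_dvd_iff_not_pow_dvd hp hM hα hL, hdiv, ne_eq,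
      not_false_eq_true, and_true, not_not]
  refine mul_right_cancel₀ (monic_X_pow_sub_one hdiv).ne_zero ?_
  rw [longFiber_mul_X_pow_sub_one hdvd, hdivisors, mul_comm,
    X_pow_sub_one_mul_prod_cyclotomic_eq_X_pow_sub_one_of_dvd ℤ (Nat.div_dvd_of_dvd hdvd) hM]

theorem exists_dvd_sub_sum_mul_longFiber {ι : Type*} [Fintype ι] {p α : ι → ℕ}
    (hp : ∀ i, (p i).Prime) (hM : M ≠ 0) (hα : ∀ i, α i ≤ M.factorization (p i)) {B : ℤ[X]}
    (hB : ∀ L, L ∣ M → (∀ i, p i ^ (M.factorization (p i) - α i + 1) ∣ L) → cyclotomic L ℤ ∣ B) :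
    ∃ P : ι → ℤ[X], X ^ M - 1 ∣ B - ∑ i, P i * longFiber M (p i) (α i) := by
  have hspan := prod_filter_forall_mem_span (fun L => cyclotomic L ℤ) M.divisors
    (fun i L => p i ^ (M.factorization (p i) - α i + 1) ∣ L)
    (fun i j x _ y _ hix hjx hjy hiy => isCoprime_cyclotomic_of_not_dvd
      (fun hxy => hiy (hix.trans hxy)) fun hyx => hjx (hjy.trans hyx)) Finset.univ
  simp only [prod_cyclotomic_eq_X_pow_sub_one hM.bot_lt,
    ← longFiber_eq_prod_cyclotomic (hp _) hM (hα _)] at hspan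
  have hdvd : ∏ L ∈ M.divisors with
      ∀ i ∈ Finset.univ, p i ^ (M.factorization (p i) - α i + 1) ∣ L, cyclotomic L ℤ ∣ B :=
    prod_cyclotomic_dvd_s11 fun L hL => by
      simp only [Finset.mem_filter, Nat.mem_divisors, Finset.mem_univ, true_imp_iff] at hL
      exact hB L hL.1.1 hL.2
  obtain ⟨a, b, hb, hab⟩ := Ideal.mem_span_insert.1 (Ideal.mem_of_dvd _ hdvd hspan)
  obtain ⟨P, rfl⟩ := Ideal.mem_span_range_iff_exists_fun.1 hb
  exact ⟨P, a, by rw [hab]; ring⟩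

end LongFiber

section Nonneg

open Function

variable {M : ℕ}

/-- Reduction of polynomials modulo `X ^ M - 1`, with values in the group ring `ℤ[ℤ_M]` so that the
residue class of a polynomial is read as an integer weight function on `ZMod M`. -/
noncomputable def cyclicReduction (M : ℕ) : ℤ[X] →ₐ[ℤ] AddMonoidAlgebra ℤ (ZMod M) :=
  aeval (.single 1 1)

lemma cyclicReduction_X_pow (k : ℕ) : cyclicReduction M (X ^ k) = .single (k : ZMod M) 1 := by
  simp [cyclicReduction, AddMonoidAlgebra.single_pow]

lemma cyclicReduction_X_pow_sub_one : cyclicReduction M (X ^ M - 1) = 0 := by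
  rw [map_sub, cyclicReduction_X_pow, map_one, CharP.cast_eq_zero, ← AddMonoidAlgebra.one_def,
    sub_self]

lemma coeff_cyclicReduction_zwmaskPoly [NeZero M] (w : ZMod M → ℤ) (x : ZMod M) :
    (cyclicReduction M (zwmaskPoly M w)).coeff x = w x := by
  have hterm (i : ℕ) : (cyclicReduction M (C (w i) * X ^ i)).coeff x =
      if (i : ZMod M) = x then w i else 0 := by
    rw [← smul_eq_C_mul, map_smul, cyclicReduction_X_pow]
    simp [Finsupp.single_apply]
  simp only [zwmaskPoly, map_sum, AddMonoidAlgebra.coeff_sum, Finsupp.finsetSum_apply, hterm]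
  rw [Finset.sum_eq_single_of_mem x.val (Finset.mem_range.2 x.val_lt)]
  · simp
  · rintro i hi hne
    refine if_neg ?_
    rintro rfl
    exact hne (ZMod.val_cast_of_lt (Finset.mem_range.1 hi)).symm

lemma periodic_coeff_cyclicReduction_mul_longFiber {q α : ℕ} (h : q ^ α ∣ M) (P : ℤ[X]) :
    Periodic (cyclicReduction M (P * longFiber M q α)).coeff ((M / q ^ α : ℕ) : ZMod M) := by
  have hfix : cyclicReduction M (P * longFiber M q α) * cyclicReduction M (X ^ (M / q ^ α)) =
      cyclicReduction M (P * longFiber M q α) := by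
    rw [← map_mul, ← sub_eq_zero, ← map_sub, ← mul_sub_one, mul_assoc,
      longFiber_mul_X_pow_sub_one h, map_mul, cyclicReduction_X_pow_sub_one, mul_zero]
  intro x
  conv_lhs => rw [← hfix, cyclicReduction_X_pow]
  simp

lemma zwmaskPoly_eq_mul_longFiber {q α : ℕ} (h : q ^ α ∣ M) {g : ZMod M → ℤ}
    (hg : Periodic g ((M / q ^ α : ℕ) : ZMod M)) :
    zwmaskPoly M g =
      (∑ a ∈ Finset.range (M / q ^ α), C (g a) * X ^ a) * longFiber M q α := by
  set r := M / q ^ α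
  have hshift (j a : ℕ) : g ((a + j * r : ℕ) : ZMod M) = g a := by
    rw [Nat.cast_add, Nat.cast_mul, hg.nat_mul j]
  calc zwmaskPoly M g = ∑ i ∈ Finset.range (q ^ α * r), C (g i) * X ^ i := by
        rw [zwmaskPoly, Nat.mul_div_cancel' h]
    _ = ∑ j ∈ Finset.range (q ^ α), (∑ a ∈ Finset.range r, C (g a) * X ^ a) * X ^ (j * r) := by
        rw [sum_range_mul]
        refine Finset.sum_congr rfl fun j _ => ?_
        simp only [hshift, add_comm (j * r), pow_add, ← mul_assoc, Finset.sum_mul]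
    _ = _ := by rw [longFiber, Finset.mul_sum]

theorem exists_nonneg_mul_longFiber_add [NeZero M] {q r a b : ℕ} (hq : q ^ a ∣ M) (hr : r ^ b ∣ M)
    {w : ZMod M → ℤ} (hw : 0 ≤ w) {P Q : ℤ[X]}
    (h : X ^ M - 1 ∣ zwmaskPoly M w - (P * longFiber M q a + Q * longFiber M r b)) :
    ∃ P' Q' : ℤ[X], (∀ j, 0 ≤ P'.coeff j) ∧ (∀ j, 0 ≤ Q'.coeff j) ∧
      zwmaskPoly M w = P' * longFiber M q a + Q' * longFiber M r b := by
  have hw_eq : w = (cyclicReduction M (P * longFiber M q a)).coeff +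
      (cyclicReduction M (Q * longFiber M r b)).coeff := by
    obtain ⟨B, hB⟩ := h
    have hred := congrArg (cyclicReduction M) hB
    rw [map_mul, cyclicReduction_X_pow_sub_one, zero_mul, map_sub, sub_eq_zero, map_add] at hred
    ext x
    rw [← coeff_cyclicReduction_zwmaskPoly w, hred]
    simp
  obtain ⟨f, g, hf, hg, hf0, hg0, hfg⟩ := exists_nonneg_periodic_add_eq
    (periodic_coeff_cyclicReduction_mul_longFiber hq P)
    (periodic_coeff_cyclicReduction_mul_longFiber hr Q) (hw_eq ▸ hw)
  have coeff_nonneg {u : ZMod M → ℤ} (hu : 0 ≤ u) (n j : ℕ) :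
      0 ≤ (∑ i ∈ Finset.range n, C (u i) * X ^ i : ℤ[X]).coeff j := by
    simp only [finsetSum_coeff, coeff_C_mul_X_pow]
    exact Finset.sum_nonneg fun i _ => by split_ifs; exacts [hu _, le_rfl]
  refine ⟨_, _, coeff_nonneg hf0 (M / q ^ a), coeff_nonneg hg0 (M / r ^ b), ?_⟩
  rw [← zwmaskPoly_eq_mul_longFiber hq hf, ← zwmaskPoly_eq_mul_longFiber hr hg, hw_eq, ← hfg]
  simp only [zwmaskPoly, Pi.add_apply, map_add, add_mul, Finset.sum_add_distrib]

end Nonneg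

theorem long_fiber_decomposition_general (K : ℕ) (p : Fin K → ℕ) (hp : ∀ i, (p i).Prime)
    (hinj : Function.Injective p) (α : Fin K → ℕ) (M N : ℕ) (hM : M ≠ 0)
    (hα : ∀ i, α i ≤ M.factorization (p i))
    (hN : N = ∏ i, p i ^ (M.factorization (p i) - α i + 1)) (w : ZMod M → ℤ)
    (hdvd : ∀ L : ℕ, N ∣ L → L ∣ M → cyclotomic L ℤ ∣ zwmaskPoly M w) :
    (∃ P : Fin K → ℤ[X],
      X ^ M - 1 ∣ zwmaskPoly M w - ∑ i, P i * longFiber M (p i) (α i)) ∧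
    (K = 2 → (∀ x, 0 ≤ w x) → ∃ P : Fin K → ℤ[X],
      (∀ i j, 0 ≤ (P i).coeff j) ∧
      X ^ M - 1 ∣ zwmaskPoly M w - ∑ i, P i * longFiber M (p i) (α i)) := by
  have : NeZero M := ⟨hM⟩
  have hpow (i : Fin K) : p i ^ α i ∣ M := ((hp i).pow_dvd_iff_le_factorization hM).2 (hα i)
  obtain ⟨P, hP⟩ := exists_dvd_sub_sum_mul_longFiber hp hM hα fun L hLM hL =>
    hdvd L (hN ▸ Fintype.prod_dvd_of_isRelPrime (fun i j hij => Nat.coprime_iff_isRelPrime.1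
      (Nat.coprime_pow_primes _ _ (hp i) (hp j) (hinj.ne hij))) hL) hLM
  refine ⟨⟨P, hP⟩, ?_⟩
  rintro rfl hw
  rw [Fin.sum_univ_two] at hP
  obtain ⟨P₀, P₁, h₀, h₁, h⟩ := exists_nonneg_mul_longFiber_add (hpow 0) (hpow 1) hw hP
  exact ⟨![P₀, P₁], by simpa [Fin.forall_fin_two] using ⟨h₀, h₁⟩, by simp [h]⟩

/-- Proposition 6.3 (Long fiber decomposition). -/
theorem long_fiber_decomposition (K : ℕ) (p n : Fin K → ℕ) (hp : ∀ i, (p i).Prime)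
    (hn : ∀ i, 1 ≤ n i) (hinj : Function.Injective p)
    (α : Fin K → ℕ) (hα1 : ∀ i, 1 ≤ α i) (hα2 : ∀ i, α i ≤ n i)
    (M N : ℕ) (hM : M = ∏ i, p i ^ n i) (hN : N = ∏ i, p i ^ (n i - α i + 1))
    (w : ZMod M → ℤ)
    (hdvd : ∀ L : ℕ, N ∣ L → L ∣ M → cyclotomic L ℤ ∣ zwmaskPoly M w) :
    (∃ P : Fin K → Polynomial ℤ,
      (X ^ M - 1) ∣ (zwmaskPoly M w - ∑ i, P i * longFiber M (p i) (α i))) ∧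
    (K = 2 → (∀ x, 0 ≤ w x) → ∃ P : Fin K → Polynomial ℤ,
      (∀ i j, 0 ≤ (P i).coeff j) ∧
      (X ^ M - 1) ∣ (zwmaskPoly M w - ∑ i, P i * longFiber M (p i) (α i))) := by
  have hv (i : Fin K) : M.factorization (p i) = n i := hM ▸ factorization_prod_prime_pow hp hinj n i
  exact long_fiber_decomposition_general K p hp hinj α M N
    (hM ▸ Finset.prod_ne_zero_iff.2 fun i _ => pow_ne_zero _ (hp i).ne_zero)
    (by simpa only [hv] using hα2) (by simpa only [hv] using hN) w hdvd
end

section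
/- Let M = p^{n_1} q^{n_2} with p, q distinct primes, let S be a nonempty set of divisors of M each at least 2, and let A : ℤ_M → ℕ be a multiset with positive total mass such that Φ_s(X) ∣ A(X) for all s ∈ S. If #EXP_p(S) ≤ 2 or #EXP_q(S) ≤ 2, then |A| ≥ FIB(S). -/
open Polynomial

/-- Mask polynomial of a multiset (weight function) on `ZMod M`:
`A(X) = ∑_{x ∈ ℤ_M} w(x) · X^{x.val}`. -/
noncomputable def wmaskPoly (M : ℕ) (w : ZMod M → ℕ) : Polynomial ℤ :=
  ∑ i ∈ Finset.range M, C ((w (i : ZMod M)) : ℤ) * X ^ i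

/-- Total mass `∑_x w(x)` of a multiset on `ZMod M`. -/
def wmass (M : ℕ) (w : ZMod M → ℕ) : ℕ :=
  ∑ i ∈ Finset.range M, w (i : ZMod M)

/-!
A weight is regarded as a polynomial `v` with natural coefficients, of mass `v(1)`. Splitting it
successively into residue classes modulo `q, q², …` gives a `q`-ary tree, and `Φ_{p^α q^β} ∣ v` says
that at depth `β` sibling parts have equal values at a primitive `p^α`-th root of unity `ζ_α`. Let
`T` be a set of at most two positive exponents of `p`. Going up the tree, one finds `E ⊆ T`
containing every `α ∈ T` with `v(ζ_α) = 0`, such that the mass is at least `p^|E| q^k`, where `k`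
counts the levels on which siblings agree at `1` or at `ζ_α` for some `α ∈ T \ E`. This is the size
of a set fibered in the direction `p` for the exponents in `E` and in the direction `q` on these
levels.

* If no `v(ζ_α)` with `α ∈ T` is zero and the lightest child is nonzero, multiplying its bound by
  `q` gives one for `v`. If the lightest child is zero, agreement at `1` or at `ζ_α` makes the mass
  or the value at `ζ_α` of every child zero, so for a nonzero child the level does not count.
* If all `v(ζ_α)` are zero, take `E = T`. The mass is divisible by `p^|T|`, and by `q^k` because
  each level of equal masses contributes a factor `q`.
* If `T = {a, a'}` and only `v(ζ_a)` is zero, then `p` divides the mass. Were the mass less than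
  `p q^k`, one could replace `v` by some `h` with the same value at `ζ_{a'}`, of no larger mass, and
  with mass divisible by `q^k`. Equal values at `ζ_{a'}` make the masses congruent modulo `p`, so
  `p q^k` divides the mass of `h`. Hence `h = 0` and `v(ζ_{a'}) = 0`, a contradiction.
-/

section Evaluation

variable {K : Type*} [Field K] {p : ℕ} {z : K} {v h : ℕ[X]}

theorem eval_one_eq_zero_iff : v.eval 1 = 0 ↔ v = 0 := by
  simp [eval_eq_sum, Polynomial.sum, ← support_eq_empty, Finset.eq_empty_iff_forall_notMem]

theorem aeval_one_eq_natCast_eval_one : aeval (1 : K) v = (v.eval 1 : ℕ) := by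
  simp [aeval_eq_sum_range, eval_eq_sum_range]

theorem aeval_map_natCast : aeval z (v.map (Nat.castRingHom ℤ)) = aeval z v :=
  aeval_map_algebraMap ℤ z v

theorem eval_one_map_natCast : (v.map (Nat.castRingHom ℤ)).eval 1 = (v.eval 1 : ℕ) := by
  simp

variable [CharZero K]

theorem eval_one_eq_of_aeval_one_eq (heq : aeval (1 : K) v = aeval 1 h) : v.eval 1 = h.eval 1 := by
  simpa [aeval_one_eq_natCast_eval_one] using heq

theorem cyclotomic_dvd_iff_aeval_eq_zero_s13 {n : ℕ} (hn : 0 < n) (hz : IsPrimitiveRoot z n)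
    {f : ℤ[X]} : cyclotomic n ℤ ∣ f ↔ aeval z f = 0 := by
  rw [cyclotomic_eq_minpoly hz hn, minpoly.isIntegrallyClosed_dvd_iff (hz.isIntegral hn)]

theorem isRelPrime_cyclotomic {m n : ℕ} (hm : 0 < m) (hn : 0 < n) (hmn : m ≠ n) :
    IsRelPrime (cyclotomic m ℤ) (cyclotomic n ℤ) := by
  refine (cyclotomic.irreducible hm).isRelPrime_iff_not_dvd.mpr fun hdvd => hmn ?_
  have hassoc := (cyclotomic.irreducible hm).associated_of_dvd (cyclotomic.irreducible hn) hdvd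
  exact cyclotomic_injective (R := ℤ)
    (eq_of_monic_of_associated (cyclotomic.monic _ _) (cyclotomic.monic _ _) hassoc)

theorem pow_card_dvd_eval_one (hp : p.Prime) {E : Finset ℕ} (hE : ∀ α ∈ E, 1 ≤ α) {f : ℤ[X]}
    (hf : ∀ α ∈ E, cyclotomic (p ^ α) ℤ ∣ f) : (p : ℤ) ^ E.card ∣ f.eval 1 := by
  have : Fact p.Prime := ⟨hp⟩
  have hprod : ∏ α ∈ E, cyclotomic (p ^ α) ℤ ∣ f :=
    Finset.prod_dvd_of_isRelPrime (fun α _ β _ hαβ => isRelPrime_cyclotomic (pow_pos hp.pos α)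
      (pow_pos hp.pos β) ((Nat.pow_right_injective hp.two_le).ne hαβ)) hf
  have heval : ∀ α ∈ E, (cyclotomic (p ^ α) ℤ).eval 1 = p := fun α hα => by
    obtain ⟨k, rfl⟩ := Nat.exists_eq_add_of_le' (hE α hα)
    exact eval_one_cyclotomic_prime_pow k
  rw [← Finset.prod_const, ← Finset.prod_congr rfl heval, ← eval_prod]
  exact eval_dvd hprod

theorem eval_one_modEq_of_aeval_eq (hp : p.Prime) {α : ℕ} (hα : 1 ≤ α)
    (hz : IsPrimitiveRoot z (p ^ α)) (heq : aeval z v = aeval z h) :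
    v.eval 1 ≡ h.eval 1 [MOD p] := by
  have hdvd : cyclotomic (p ^ α) ℤ ∣
      h.map (Nat.castRingHom ℤ) - v.map (Nat.castRingHom ℤ) := by
    rw [cyclotomic_dvd_iff_aeval_eq_zero_s13 (pow_pos hp.pos α) hz, map_sub, aeval_map_natCast,
      aeval_map_natCast, heq, sub_self]
  have := pow_card_dvd_eval_one hp (E := {α}) (by simpa using hα) (by simpa using hdvd)
  rwa [Finset.card_singleton, pow_one, eval_sub, eval_one_map_natCast, eval_one_map_natCast,
    ← Nat.modEq_iff_dvd] at this

end Evaluation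

section FiberedSets

variable {p q : ℕ}

theorem cyclotomic_dvd_expand_of_coprime {n t : ℕ} (hn : 0 < n) (ht : t.Coprime n) :
    cyclotomic n ℤ ∣ expand ℤ t (cyclotomic n ℤ) := by
  have hζ := Complex.isPrimitiveRoot_exp n hn.ne'
  rw [cyclotomic_dvd_iff_aeval_eq_zero_s13 hn hζ, expand_aeval,
    ← cyclotomic_dvd_iff_aeval_eq_zero_s13 hn (hζ.pow_of_coprime t ht)]

theorem fiberPoly_eq_expand_cyclotomic (hp : p.Prime) (N : ℕ) :
    fiberPoly N p = expand ℤ (N / p) (cyclotomic p ℤ) := by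
  have : Fact p.Prime := ⟨hp⟩
  simp only [fiberPoly, cyclotomic_prime, map_sum, map_pow, expand_X, ← pow_mul, mul_comm]

theorem fiberPoly_dvd_fiberPoly_mul_s13 (hp : p.Prime) {N t : ℕ} (hN : p ∣ N) (ht : t.Coprime p) :
    fiberPoly N p ∣ fiberPoly (N * t) p := by
  obtain ⟨g, hg⟩ := cyclotomic_dvd_expand_of_coprime hp.pos ht
  rw [fiberPoly_eq_expand_cyclotomic hp, fiberPoly_eq_expand_cyclotomic hp,
    Nat.mul_div_right_comm hN, ← expand_expand, hg, map_mul]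
  exact dvd_mul_right _ _

theorem exists_maskPoly_eq_mul {B : Finset ℕ} {k : ℕ} (hB : ∀ x ∈ B, x < k) (r : ℕ) :
    ∃ B' : Finset ℕ, B'.card = r * B.card ∧
      maskPoly B' = (∑ j ∈ Finset.range r, X ^ (j * k)) * maskPoly B := by
  have hinj : Set.InjOn (fun t : ℕ × ℕ => t.1 * k + t.2) (Finset.range r ×ˢ B : Finset _) := by
    rintro ⟨j, x⟩ hx ⟨j', x'⟩ hx' heq
    have hlt := hB x (Finset.mem_product.mp hx).2
    have hlt' := hB x' (Finset.mem_product.mp hx').2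
    have hk : 0 < k := by omega
    have hj : j = j' := by
      simpa [add_comm (_ * k), Nat.add_mul_div_right _ _ hk, Nat.div_eq_of_lt hlt,
        Nat.div_eq_of_lt hlt'] using congrArg (· / k) heq
    subst hj
    simpa using heq
  refine ⟨(Finset.range r ×ˢ B).image fun t => t.1 * k + t.2, ?_, ?_⟩
  · rw [Finset.card_image_of_injOn hinj, Finset.card_product, Finset.card_range]
  · simp only [maskPoly, Finset.sum_image hinj, Finset.sum_product, Finset.sum_mul_sum, pow_add]

-- The fiber on scale `N` is stretched by a large factor prime to `p`, so that its translates of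
-- `B` are disjoint.
theorem exists_fibered_extension (hp : p.Prime) {N : ℕ} (hN : p ∣ N) (hN₀ : N ≠ 0)
    (B : Finset ℕ) : ∃ B' : Finset ℕ, B'.card = p * B.card ∧
      maskPoly B ∣ maskPoly B' ∧ fiberPoly N p ∣ maskPoly B' := by
  set t := p * (B.sup id + 1) + 1 with ht
  have hpos : 0 < N / p := Nat.div_pos (Nat.le_of_dvd (Nat.pos_of_ne_zero hN₀) hN) hp.pos
  have hB : ∀ x ∈ B, x < N * t / p := fun x hx => by
    have hle : x ≤ B.sup id := Finset.le_sup (f := id) hx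
    rw [Nat.mul_div_right_comm hN]
    nlinarith [hp.two_le]
  obtain ⟨B', hcard, hmask⟩ := exists_maskPoly_eq_mul hB p
  have hdvd : fiberPoly N p ∣ fiberPoly (N * t) p :=
    fiberPoly_dvd_fiberPoly_mul_s13 hp hN (by simp [ht])
  exact ⟨B', hcard, Dvd.intro_left _ hmask.symm, hdvd.trans (Dvd.intro _ hmask.symm)⟩

theorem exists_fibered_on_scales {ι : Type*} (I : Finset ι) {r N : ι → ℕ}
    (hr : ∀ i ∈ I, (r i).Prime) (hN : ∀ i ∈ I, r i ∣ N i) (hN₀ : ∀ i ∈ I, N i ≠ 0) :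
    ∃ B : Finset ℕ, B.card = ∏ i ∈ I, r i ∧ ∀ i ∈ I, fiberPoly (N i) (r i) ∣ maskPoly B := by
  classical
  induction I using Finset.induction_on with
  | empty => exact ⟨{0}, by simp⟩
  | insert i I hi ih =>
    simp only [Finset.forall_mem_insert] at hr hN hN₀ ⊢
    obtain ⟨B, hcard, hB⟩ := ih hr.2 hN.2 hN₀.2
    obtain ⟨B', hcard', hdvd, hfib⟩ := exists_fibered_extension hr.1 hN.1 hN₀.1 B
    exact ⟨B', by rw [hcard', hcard, Finset.prod_insert hi], hfib,
      fun k hk => (hB k hk).trans hdvd⟩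

theorem FIBs_le_prod {ι : Type*} (I : Finset ι) {r N : ι → ℕ} {S : Finset ℕ}
    (hr : ∀ i ∈ I, (r i).Prime) (hN : ∀ i ∈ I, r i ∣ N i) (hN₀ : ∀ i ∈ I, N i ≠ 0)
    (hS : ∀ s ∈ S, ∃ i ∈ I, ∃ t, r i ∣ s ∧ t.Coprime (r i) ∧ N i = s * t) :
    FIBs S ≤ ∏ i ∈ I, r i := by
  obtain ⟨B, hcard, hB⟩ := exists_fibered_on_scales I hr hN hN₀
  refine Nat.sInf_le ⟨B, ?_, hcard, fun s hs => ?_⟩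
  · rw [← Finset.card_pos, hcard]
    exact Finset.prod_pos fun i hi => (hr i hi).pos
  · obtain ⟨i, hi, t, hdvd, ht, heq⟩ := hS s hs
    exact ⟨r i, hr i hi, hdvd,
      (fiberPoly_dvd_fiberPoly_mul_s13 (hr i hi) hdvd ht).trans (heq ▸ hB i hi)⟩

theorem FIBs_le_pow_card_mul_pow_card (hp : p.Prime) (hq : q.Prime) (hpq : p.Coprime q)
    {S E G : Finset ℕ} (hE : ∀ α ∈ E, 1 ≤ α) (hG : ∀ β ∈ G, 1 ≤ β) (n : ℕ)
    (hS : ∀ s ∈ S, ∃ α ≤ n, ∃ β ≤ n, s = p ^ α * q ^ β ∧ (α ∈ E ∨ β ∈ G)) :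
    FIBs S ≤ p ^ E.card * q ^ G.card := by
  have hp₀ := hp.ne_zero
  have hq₀ := hq.ne_zero
  have hle := FIBs_le_prod (S := S) (E.disjSum G) (r := Sum.elim (fun _ => p) fun _ => q)
    (N := Sum.elim (fun α => p ^ α * q ^ n) fun β => p ^ n * q ^ β)
    (by simp [hp, hq]) ?_ (by simp [hp₀, hq₀]) fun s hs => ?_
  · simpa [Finset.prod_disjSum] using hle
  · simp only [Finset.mem_disjSum]
    rintro _ (⟨α, hα, rfl⟩ | ⟨β, hβ, rfl⟩)
    · exact (dvd_pow_self p (Nat.one_le_iff_ne_zero.mp (hE α hα))).mul_right _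
    · exact (dvd_pow_self q (Nat.one_le_iff_ne_zero.mp (hG β hβ))).mul_left _
  · obtain ⟨α, hα, β, hβ, rfl, hαE | hβG⟩ := hS s hs
    · refine ⟨.inl α, by simpa using hαE, q ^ (n - β), ?_, hpq.symm.pow_left _, ?_⟩
      · exact (dvd_pow_self p (Nat.one_le_iff_ne_zero.mp (hE α hαE))).mul_right _
      · simp [mul_assoc, ← pow_add, Nat.add_sub_cancel' hβ]
    · refine ⟨.inr β, by simpa using hβG, p ^ (n - α), ?_, hpq.pow_left _, ?_⟩
      · exact (dvd_pow_self q (Nat.one_le_iff_ne_zero.mp (hG β hβG))).mul_left _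
      · simp only [Sum.elim_inr]
        rw [mul_right_comm, ← pow_add, Nat.add_sub_cancel' hα]

end FiberedSets

section ResiduePart

/-- The sum of the monomials of `v` whose exponents are congruent to `j` modulo `N`. Since exponents
are compared through `i % N`, it is zero when `0 < N ≤ j`. -/
noncomputable def residuePart {R : Type*} [Semiring R] (N j : ℕ) (v : R[X]) : R[X] :=
  ∑ i ∈ v.support with i % N = j, monomial i (v.coeff i)

theorem residuePart_one_zero {R : Type*} [Semiring R] (v : R[X]) : residuePart 1 0 v = v := by
  simpa [residuePart, Nat.mod_one] using v.as_sum_support.symm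

theorem residuePart_eq_sum {R : Type*} [Semiring R] {N j : ℕ} (q : ℕ) [NeZero q] (hj : j < N)
    (v : R[X]) : residuePart N j v = ∑ c : Fin q, residuePart (N * q) (j + N * c) v := by
  have hdigit (i : ℕ) (c : Fin q) :
      i % (N * q) = j + N * c ↔ i % N = j ∧ Fin.ofNat q (i / N) = c := by
    rw [Nat.mod_mul]
    refine ⟨fun h => ?_, fun ⟨h, hc⟩ => by simp [h, ← hc]⟩
    have hmod : i % N = j := by
      simpa [Nat.mod_eq_of_lt hj] using congrArg (· % N) h
    refine ⟨hmod, Fin.ext ?_⟩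
    rw [hmod, Nat.add_left_cancel_iff] at h
    exact Nat.eq_of_mul_eq_mul_left (j.zero_le.trans_lt hj) h
  simp only [residuePart, hdigit, Finset.sum_filter, ite_and]
  rw [Finset.sum_comm]
  refine Finset.sum_congr rfl fun i _ => ?_
  split_ifs <;> simp

variable {K : Type*} [Field K]

theorem sum_div_pow_eq_ite {N : ℕ} {ω : K} (hω : IsPrimitiveRoot ω N) (i j : ℕ) :
    ∑ k ∈ Finset.range N, (ω ^ i / ω ^ j) ^ k = if i ≡ j [MOD N] then (N : K) else 0 := by
  rcases N.eq_zero_or_pos with rfl | hN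
  · simp
  have hω₀ : ω ≠ 0 := hω.ne_zero hN.ne'
  have hone : ω ^ i / ω ^ j = 1 ↔ i ≡ j [MOD N] := by
    rw [Nat.ModEq.comm, Nat.modEq_iff_dvd, ← hω.zpow_eq_one_iff_dvd, zpow_sub₀ hω₀, zpow_natCast,
      zpow_natCast]
  split_ifs with hij
  · simp [hone.mpr hij]
  · rw [geom_sum_eq (hone.not.mpr hij), div_pow, pow_right_comm, pow_right_comm ω j,
      hω.pow_eq_one, one_pow, one_pow, div_one, sub_self, zero_div]

-- Fourier inversion on `ℤ/N`.
theorem natCast_mul_aeval_residuePart {N j : ℕ} (hj : j < N) {ω : K} (hω : IsPrimitiveRoot ω N)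
    (z : K) (v : ℕ[X]) : N * aeval z (residuePart N j v) =
      ∑ k ∈ Finset.range N, ((ω ^ k)⁻¹) ^ j * aeval (z * ω ^ k) v := by
  have hmod (i : ℕ) : i ≡ j [MOD N] ↔ i % N = j := by rw [Nat.ModEq, Nat.mod_eq_of_lt hj]
  have hterm (k i : ℕ) : ((ω ^ k)⁻¹) ^ j * (v.coeff i * (z * ω ^ k) ^ i) =
      v.coeff i * z ^ i * (ω ^ i / ω ^ j) ^ k := by
    rw [mul_pow, inv_pow, div_pow, pow_right_comm ω k, pow_right_comm ω k]
    ring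
  have hsum (x : K) : aeval x v = ∑ i ∈ v.support, v.coeff i * x ^ i := by
    simp [aeval_def, eval₂_eq_sum, Polynomial.sum]
  have hres : aeval z (residuePart N j v) =
      ∑ i ∈ v.support, if i ≡ j [MOD N] then v.coeff i * z ^ i else 0 := by
    rw [residuePart, map_sum, Finset.sum_filter]
    simp only [aeval_monomial, hmod, eq_natCast]
  simp only [hsum, hres, Finset.mul_sum, hterm]
  rw [Finset.sum_comm]
  refine Finset.sum_congr rfl fun i _ => ?_
  rw [← Finset.mul_sum, sum_div_pow_eq_ite hω, mul_ite, mul_ite, mul_zero, mul_zero, mul_comm]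

theorem aeval_residuePart_eq_of_modEq [CharZero K] {p q α b j j' : ℕ} (hp : p.Prime)
    (hq : q.Prime) (hpq : p.Coprime q) {z ω : K} (hz : IsPrimitiveRoot z (p ^ α))
    (hω : IsPrimitiveRoot ω (q ^ (b + 1))) {v : ℕ[X]}
    (hdvd : cyclotomic (p ^ α * q ^ (b + 1)) ℤ ∣ v.map (Nat.castRingHom ℤ))
    (hj : j < q ^ (b + 1)) (hj' : j' < q ^ (b + 1)) (hmod : j ≡ j' [MOD q ^ b]) :
    aeval z (residuePart (q ^ (b + 1)) j v) = aeval z (residuePart (q ^ (b + 1)) j' v) := by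
  have : Fact q.Prime := ⟨hq⟩
  have hq₀ : ((q ^ (b + 1) : ℕ) : K) ≠ 0 := Nat.cast_ne_zero.mpr (pow_ne_zero _ hq.ne_zero)
  refine mul_left_cancel₀ hq₀ ?_
  rw [natCast_mul_aeval_residuePart hj hω, natCast_mul_aeval_residuePart hj' hω]
  refine Finset.sum_congr rfl fun k _ => ?_
  -- A term with `ω ^ k` of order dividing `q ^ b` depends on `j` only modulo `q ^ b`; in the others
  -- `v` is evaluated at a primitive root of order `p ^ α * q ^ (b + 1)`.
  by_cases hk : (ω ^ k) ^ q ^ b = 1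
  · rw [pow_eq_pow_of_modEq hmod (by rw [inv_pow, hk, inv_one])]
  · have hord : orderOf (ω ^ k) = q ^ (b + 1) :=
      orderOf_eq_prime_pow hk (by rw [← pow_mul, mul_comm, pow_mul, hω.pow_eq_one, one_pow])
    have hcop : (orderOf z).Coprime (orderOf (ω ^ k)) := by
      rw [hord, ← hz.eq_orderOf]
      exact hpq.pow _ _
    have hprim : IsPrimitiveRoot (z * ω ^ k) (p ^ α * q ^ (b + 1)) := by
      rw [IsPrimitiveRoot.iff_orderOf, (Commute.all _ _).orderOf_mul_eq_mul_orderOf_of_coprime hcop,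
        hord, ← hz.eq_orderOf]
    have hzero : aeval (z * ω ^ k) v = 0 := by
      rwa [← aeval_map_natCast, ← cyclotomic_dvd_iff_aeval_eq_zero_s13 _ hprim]
      exact mul_pos (pow_pos hp.pos _) (pow_pos hq.pos _)
    rw [hzero, mul_zero, mul_zero]

end ResiduePart

section Reduction

variable {q d : ℕ}

theorem eq_of_modEq_of_dvd {p m m' : ℕ} (hpd : p.Coprime d) (hmod : m ≡ m' [MOD p])
    (hd : d ∣ m) (hd' : d ∣ m') (hm : m < p * d) (hm' : m' < p * d) : m = m' := by
  have hmod' : m ≡ m' [MOD d] :=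
    (Nat.modEq_zero_iff_dvd.mpr hd).trans (Nat.modEq_zero_iff_dvd.mpr hd').symm
  exact ((Nat.modEq_and_modEq_iff_modEq_mul hpd).mp ⟨hmod, hmod'⟩).eq_of_lt_of_lt hm hm'

theorem mul_dvd_sum_of_forall_eq {m : Fin q → ℕ} (hm : ∀ c c', m c = m c')
    (hd : ∀ c, d ∣ m c) : q * d ∣ ∑ c, m c := by
  rcases isEmpty_or_nonempty (Fin q) with _ | ⟨⟨c₀⟩⟩
  · simp
  · rw [Finset.sum_congr rfl fun c _ => hm c c₀]
    simpa using mul_dvd_mul_left q (hd c₀)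

variable {K : Type*} [Field K]

/-- `v` can be replaced, without changing its value at `z` and without increasing its mass, by a
polynomial with natural coefficients whose mass is divisible by `d`. The mass of `v : ℕ[X]` is
`v.eval 1` throughout. -/
def HasReduction (z : K) (d : ℕ) (v : ℕ[X]) : Prop :=
  ∃ h : ℕ[X], aeval z h = aeval z v ∧ h.eval 1 ≤ v.eval 1 ∧ d ∣ h.eval 1

variable {z : K} {f : Fin q → ℕ[X]}

theorem HasReduction.sum (hf : ∀ c, HasReduction z d (f c)) : HasReduction z d (∑ c, f c) := by
  choose h hval hle hdvd using hf
  refine ⟨∑ c, h c, by simp only [map_sum, hval], ?_, ?_⟩ <;> simp only [eval_finsetSum]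
  · exact Finset.sum_le_sum fun c _ => hle c
  · exact Finset.dvd_sum fun c _ => hdvd c

theorem HasReduction.sum_of_eval_one_eq [CharZero K] {p α : ℕ} (hp : p.Prime) (hpd : p.Coprime d)
    (hα : 1 ≤ α) (hz : IsPrimitiveRoot z (p ^ α)) (hmass : ∀ c c', (f c).eval 1 = (f c').eval 1)
    (hlt : ∀ c, (f c).eval 1 < p * d) (hf : ∀ c, HasReduction z d (f c)) :
    HasReduction z (q * d) (∑ c, f c) := by
  choose h hval hle hdvd using hf
  have hmod (c) : (h c).eval 1 ≡ (f c).eval 1 [MOD p] :=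
    eval_one_modEq_of_aeval_eq hp hα hz (hval c)
  have hmass' (c c') : (h c).eval 1 = (h c').eval 1 :=
    eq_of_modEq_of_dvd hpd ((hmod c).trans (hmass c c' ▸ (hmod c').symm)) (hdvd c) (hdvd c')
      ((hle c).trans_lt (hlt c)) ((hle c').trans_lt (hlt c'))
  refine ⟨∑ c, h c, by simp only [map_sum, hval], ?_, ?_⟩ <;> simp only [eval_finsetSum]
  · exact Finset.sum_le_sum fun c _ => hle c
  · exact mul_dvd_sum_of_forall_eq hmass' hdvd

theorem mul_eval_one_le_eval_one_sum {c₀ : Fin q}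
    (hmin : ∀ c, (f c₀).eval 1 ≤ (f c).eval 1) : q * (f c₀).eval 1 ≤ (∑ c, f c).eval 1 := by
  simpa [eval_finsetSum] using Finset.card_nsmul_le_sum Finset.univ _ _ fun c _ => hmin c

theorem eval_one_le_eval_one_sum (c : Fin q) : (f c).eval 1 ≤ (∑ c, f c).eval 1 := by
  rw [eval_finsetSum]
  exact Finset.single_le_sum (f := fun c => (f c).eval 1) (fun _ _ => Nat.zero_le _)
    (Finset.mem_univ c)

theorem HasReduction.sum_of_aeval_eq (hval : ∀ c c', aeval z (f c) = aeval z (f c'))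
    {c₀ : Fin q} (hmin : ∀ c, (f c₀).eval 1 ≤ (f c).eval 1) (hf : HasReduction z d (f c₀)) :
    HasReduction z (q * d) (∑ c, f c) := by
  -- Every child is replaced by a copy of the reduction of the lightest one.
  obtain ⟨h, hval₀, hle, hdvd⟩ := hf
  refine ⟨q • h, ?_, ?_, ?_⟩
  · rw [map_nsmul, hval₀, map_sum, Finset.sum_congr rfl fun c _ => hval c c₀]
    simp
  · simpa using (Nat.mul_le_mul_left q hle).trans (mul_eval_one_le_eval_one_sum hmin)
  · simpa using mul_dvd_mul_left q hdvd

end Reduction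

section FiberTree

variable {K : Type*} [Field K] {p q : ℕ} {ζ : ℕ → K} {L : List (Finset ℕ)} {v : ℕ[X]}

/-- `v` splits repeatedly into `q` children, one round for each entry of the list, where the `q`
children of a vertex of level `A` have equal values at `ζ α` for every `α ∈ A`. In the application
`ζ α` is a primitive `p ^ α`-th root of unity, so that `0 ∈ A` expresses equality of masses. -/
inductive IsFiberTree (q : ℕ) (ζ : ℕ → K) : List (Finset ℕ) → ℕ[X] → Prop
  | leaf (v : ℕ[X]) : IsFiberTree q ζ [] v
  | node {A : Finset ℕ} {L : List (Finset ℕ)} (f : Fin q → ℕ[X]) (hf : ∀ c, IsFiberTree q ζ L (f c))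
      (hA : ∀ α ∈ A, ∀ c c', aeval (ζ α) (f c) = aeval (ζ α) (f c')) :
      IsFiberTree q ζ (A :: L) (∑ c, f c)

/-- The number of levels in `L` that contain an exponent from `F`. -/
def meetCount (F : Finset ℕ) (L : List (Finset ℕ)) : ℕ :=
  L.countP fun A => ¬Disjoint A F

theorem meetCount_nil (F : Finset ℕ) : meetCount F [] = 0 := rfl

theorem meetCount_cons_of_disjoint {F A : Finset ℕ} (h : Disjoint A F) :
    meetCount F (A :: L) = meetCount F L := by
  simp [meetCount, h]

theorem meetCount_cons_of_not_disjoint {F A : Finset ℕ} (h : ¬Disjoint A F) :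
    meetCount F (A :: L) = meetCount F L + 1 := by
  simp [meetCount, h]

theorem meetCount_cons_le (F A : Finset ℕ) : meetCount F (A :: L) ≤ meetCount F L + 1 := by
  by_cases h : Disjoint A F
  · exact (meetCount_cons_of_disjoint h).trans_le (Nat.le_succ _)
  · exact (meetCount_cons_of_not_disjoint h).le

namespace IsFiberTree

theorem pow_meetCount_dvd_eval_one [CharZero K] (hζ₀ : ζ 0 = 1) (hv : IsFiberTree q ζ L v) :
    q ^ meetCount {0} L ∣ v.eval 1 := by
  induction hv with
  | leaf => simp [meetCount_nil]
  | @node A L f _ hA ih =>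
    rw [eval_finsetSum]
    by_cases h0 : 0 ∈ A
    · rw [meetCount_cons_of_not_disjoint (by simpa using h0), pow_succ']
      exact mul_dvd_sum_of_forall_eq
        (fun c c' => eval_one_eq_of_aeval_one_eq (K := K) (hζ₀ ▸ hA 0 h0 c c')) ih
    · rw [meetCount_cons_of_disjoint (by simpa using h0)]
      exact Finset.dvd_sum fun c _ => ih c

variable [CharZero K]

theorem hasReduction [NeZero q] {a : ℕ} (hp : p.Prime) (hpq : p.Coprime q) (hζ₀ : ζ 0 = 1)
    (ha : 1 ≤ a) (hζ : IsPrimitiveRoot (ζ a) (p ^ a)) (hv : IsFiberTree q ζ L v)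
    (hlt : v.eval 1 < p * q ^ meetCount {0, a} L) :
    HasReduction (ζ a) (q ^ meetCount {0, a} L) v := by
  induction hv with
  | leaf v => exact ⟨v, rfl, le_rfl, by simp [meetCount_nil]⟩
  | @node A L f _ hA ih =>
    by_cases h0 : 0 ∈ A
    · have hcount : meetCount {0, a} (A :: L) = meetCount {0, a} L + 1 :=
        meetCount_cons_of_not_disjoint (by simp [h0])
      rw [hcount, pow_succ', mul_left_comm] at hlt
      have hmass (c c') : (f c).eval 1 = (f c').eval 1 :=
        eval_one_eq_of_aeval_one_eq (K := K) (hζ₀ ▸ hA 0 h0 c c')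
      have hltc (c) : (f c).eval 1 < p * q ^ meetCount {0, a} L :=
        lt_of_mul_lt_mul_left
          ((mul_eval_one_le_eval_one_sum fun c' => (hmass c c').le).trans_lt hlt) q.zero_le
      rw [hcount, pow_succ']
      exact .sum_of_eval_one_eq hp (hpq.pow_right _) ha hζ hmass hltc fun c => ih c (hltc c)
    by_cases ha' : a ∈ A
    · have hcount : meetCount {0, a} (A :: L) = meetCount {0, a} L + 1 :=
        meetCount_cons_of_not_disjoint (by simp [ha'])
      rw [hcount, pow_succ', mul_left_comm] at hlt
      obtain ⟨c₀, hmin⟩ := Finite.exists_min fun c => (f c).eval 1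
      have hltc : (f c₀).eval 1 < p * q ^ meetCount {0, a} L :=
        lt_of_mul_lt_mul_left ((mul_eval_one_le_eval_one_sum hmin).trans_lt hlt) q.zero_le
      rw [hcount, pow_succ']
      exact .sum_of_aeval_eq (hA a ha') hmin (ih c₀ hltc)
    · have hcount : meetCount {0, a} (A :: L) = meetCount {0, a} L :=
        meetCount_cons_of_disjoint (by simp [h0, ha'])
      rw [hcount] at hlt ⊢
      exact .sum fun c => ih c ((eval_one_le_eval_one_sum c).trans_lt hlt)

theorem aeval_eq_zero_of_lt [NeZero q] {a : ℕ} (hp : p.Prime) (hpq : p.Coprime q) (hζ₀ : ζ 0 = 1)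
    (ha : 1 ≤ a) (hζ : IsPrimitiveRoot (ζ a) (p ^ a)) (hv : IsFiberTree q ζ L v)
    (hlt : v.eval 1 < p * q ^ meetCount {0, a} L) (hdvd : p ∣ v.eval 1) : aeval (ζ a) v = 0 := by
  obtain ⟨h, hval, hle, hqh⟩ := hv.hasReduction hp hpq hζ₀ ha hζ hlt
  have hph : p ∣ h.eval 1 :=
    ((eval_one_modEq_of_aeval_eq hp ha hζ hval).dvd_iff dvd_rfl).mpr hdvd
  have hh : h.eval 1 = 0 := Nat.eq_zero_of_dvd_of_lt
    ((hpq.pow_right _).mul_dvd_of_dvd_of_dvd hph hqh) (hle.trans_lt hlt)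
  rw [← hval, eval_one_eq_zero_iff.mp hh, map_zero]

end IsFiberTree

theorem pow_card_dvd_eval_one_of_aeval_eq_zero [CharZero K] (hp : p.Prime)
    (hζ : ∀ α, IsPrimitiveRoot (ζ α) (p ^ α)) {E : Finset ℕ} (hE : ∀ α ∈ E, 1 ≤ α)
    (hroot : ∀ α ∈ E, aeval (ζ α) v = 0) : p ^ E.card ∣ v.eval 1 := by
  have hdvd : ∀ α ∈ E, cyclotomic (p ^ α) ℤ ∣ v.map (Nat.castRingHom ℤ) := fun α hα => by
    rw [cyclotomic_dvd_iff_aeval_eq_zero_s13 (pow_pos hp.pos α) (hζ α), aeval_map_natCast, hroot α hα]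
  exact_mod_cast eval_one_map_natCast (v := v) ▸ pow_card_dvd_eval_one hp hE hdvd

/-- The mass of `v` dominates that of a set fibered in the `p` direction for the exponents in `E`
and in the `q` direction on every level of `L` that meets `{0} ∪ (T \ E)`. Requiring `E` to contain
each `α ∈ T` with `v (ζ α) = 0` accounts for the scales `p ^ α` without a factor `q`, and makes the
bound pass from a child to its parent when a sibling of the child is zero. -/
def FiberBound (p q : ℕ) (ζ : ℕ → K) (T : Finset ℕ) (L : List (Finset ℕ)) (v : ℕ[X]) : Prop :=
  ∃ E ⊆ T, (∀ α ∈ T, aeval (ζ α) v = 0 → α ∈ E) ∧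
    p ^ E.card * q ^ meetCount (insert 0 (T \ E)) L ≤ v.eval 1

theorem FiberBound.sum_of_forall_aeval_ne_zero [CharZero K] [NeZero q] (hζ₀ : ζ 0 = 1)
    {T A : Finset ℕ} {f : Fin q → ℕ[X]}
    (hA : ∀ α ∈ A, ∀ c c', aeval (ζ α) (f c) = aeval (ζ α) (f c'))
    (hne : ∀ α ∈ T, aeval (ζ α) (∑ c, f c) ≠ 0) (hf₀ : ∑ c, f c ≠ 0)
    (hf : ∀ c, f c ≠ 0 → FiberBound p q ζ T L (f c)) :
    FiberBound p q ζ T (A :: L) (∑ c, f c) := by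
  obtain ⟨c₀, hmin⟩ := Finite.exists_min fun c => (f c).eval 1
  have hnovanish (E : Finset ℕ) : ∀ α ∈ T, aeval (ζ α) (∑ c, f c) = 0 → α ∈ E :=
    fun α hα hα₀ => absurd hα₀ (hne α hα)
  by_cases hc₀ : f c₀ = 0
  · obtain ⟨c₁, -, hc₁⟩ := Finset.exists_ne_zero_of_sum_ne_zero hf₀
    obtain ⟨E, hET, hE, hle⟩ := hf c₁ hc₁
    have hdisj : Disjoint A (insert 0 (T \ E)) := by
      refine Finset.disjoint_left.mpr fun α hα hαF => ?_
      have hval : aeval (ζ α) (f c₁) = 0 := by rw [hA α hα c₁ c₀, hc₀, map_zero]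
      rcases Finset.mem_insert.mp hαF with rfl | hα'
      · refine hc₁ (eval_one_eq_zero_iff.mp ?_)
        simpa [hζ₀, aeval_one_eq_natCast_eval_one] using hval
      · rw [Finset.mem_sdiff] at hα'
        exact hα'.2 (hE α hα'.1 hval)
    refine ⟨E, hET, hnovanish E, ?_⟩
    rw [meetCount_cons_of_disjoint hdisj]
    exact hle.trans (eval_one_le_eval_one_sum c₁)
  · obtain ⟨E, hET, -, hle⟩ := hf c₀ hc₀
    refine ⟨E, hET, hnovanish E, ?_⟩
    calc p ^ E.card * q ^ meetCount (insert 0 (T \ E)) (A :: L)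
        ≤ p ^ E.card * q ^ (meetCount (insert 0 (T \ E)) L + 1) :=
          Nat.mul_le_mul_left _ (Nat.pow_le_pow_right (NeZero.pos q) (meetCount_cons_le _ _))
      _ = q * (p ^ E.card * q ^ meetCount (insert 0 (T \ E)) L) := by ring
      _ ≤ q * (f c₀).eval 1 := Nat.mul_le_mul_left q hle
      _ ≤ (∑ c, f c).eval 1 := mul_eval_one_le_eval_one_sum hmin

namespace IsFiberTree

variable [CharZero K] [NeZero q] {T : Finset ℕ}

theorem fiberBound_of_aeval_eq_zero (hp : p.Prime) (hpq : p.Coprime q)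
    (hζ : ∀ α, IsPrimitiveRoot (ζ α) (p ^ α)) (hT : ∀ α ∈ T, 1 ≤ α) (hT₂ : T.card ≤ 2)
    (hv : IsFiberTree q ζ L v) (hv₀ : v ≠ 0) {a : ℕ} (ha : a ∈ T) (hroot : aeval (ζ a) v = 0) :
    FiberBound p q ζ T L v := by
  have hpos : 0 < v.eval 1 := Nat.pos_of_ne_zero (eval_one_eq_zero_iff.not.mpr hv₀)
  have hζ₀ : ζ 0 = 1 := by simpa using hζ 0
  by_cases hall : ∀ α ∈ T, aeval (ζ α) v = 0
  · refine ⟨T, subset_rfl, fun α hα _ => hα, Nat.le_of_dvd hpos ?_⟩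
    rw [Finset.sdiff_self, insert_empty_eq]
    exact (hpq.pow _ _).mul_dvd_of_dvd_of_dvd
      (pow_card_dvd_eval_one_of_aeval_eq_zero hp hζ hT hall) (hv.pow_meetCount_dvd_eval_one hζ₀)
  · push Not at hall
    obtain ⟨a', ha', hne⟩ := hall
    have haa' : a ≠ a' := fun h => hne (h ▸ hroot)
    have hTeq : T = {a, a'} := (Finset.eq_of_subset_of_card_le
      (by simp [Finset.insert_subset_iff, ha, ha']) (by simpa [Finset.card_pair haa'])).symm
    have hpv : p ∣ v.eval 1 := by
      simpa using pow_card_dvd_eval_one_of_aeval_eq_zero hp hζ (E := {a})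
        (by simpa using hT a ha) (by simpa using hroot)
    refine ⟨{a}, by simpa using ha, fun α hα hα₀ => ?_, ?_⟩
    · rw [hTeq, Finset.mem_insert, Finset.mem_singleton] at hα
      rcases hα with rfl | rfl
      · exact Finset.mem_singleton_self _
      · exact absurd hα₀ hne
    · have hsdiff : T \ {a} = {a'} := by
        rw [hTeq, Finset.insert_sdiff_of_mem _ (Finset.mem_singleton_self a),
          Finset.sdiff_singleton_eq_erase, Finset.erase_eq_of_notMem (by simpa using haa')]
      rw [hsdiff, Finset.card_singleton, pow_one]
      by_contra! hlt
      exact hne (hv.aeval_eq_zero_of_lt hp hpq hζ₀ (hT a' ha') (hζ a') hlt hpv)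

theorem fiberBound (hp : p.Prime) (hpq : p.Coprime q)
    (hζ : ∀ α, IsPrimitiveRoot (ζ α) (p ^ α)) (hT : ∀ α ∈ T, 1 ≤ α) (hT₂ : T.card ≤ 2)
    (hv : IsFiberTree q ζ L v) (hv₀ : v ≠ 0) : FiberBound p q ζ T L v := by
  induction hv with
  | leaf v =>
    by_cases hroot : ∃ a ∈ T, aeval (ζ a) v = 0
    · obtain ⟨a, ha, hroot⟩ := hroot
      exact (IsFiberTree.leaf v).fiberBound_of_aeval_eq_zero hp hpq hζ hT hT₂ hv₀ ha hroot
    · push Not at hroot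
      have hpos : 0 < v.eval 1 := Nat.pos_of_ne_zero (eval_one_eq_zero_iff.not.mpr hv₀)
      exact ⟨∅, T.empty_subset, fun α hα hα₀ => absurd hα₀ (hroot α hα),
        by simpa [meetCount_nil] using hpos.nat_succ_le⟩
  | @node A L f hf hA ih =>
    by_cases hroot : ∃ a ∈ T, aeval (ζ a) (∑ c, f c) = 0
    · obtain ⟨a, ha, hroot⟩ := hroot
      exact (IsFiberTree.node f hf hA).fiberBound_of_aeval_eq_zero hp hpq hζ hT hT₂ hv₀ ha hroot
    · push Not at hroot
      exact .sum_of_forall_aeval_ne_zero (by simpa using hζ 0) hA hroot hv₀ ih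

end IsFiberTree

end FiberTree

section TreeOfPolynomial

variable {K : Type*} [Field K] [CharZero K] {p q : ℕ} {ζ ω : ℕ → K} {A : ℕ → Finset ℕ} {v : ℕ[X]}

theorem isFiberTree_residuePart (hp : p.Prime) (hq : q.Prime) (hpq : p.Coprime q)
    (hζ : ∀ α, IsPrimitiveRoot (ζ α) (p ^ α)) (hω : ∀ β, IsPrimitiveRoot (ω β) (q ^ β))
    (hA : ∀ β, ∀ α ∈ A β, cyclotomic (p ^ α * q ^ β) ℤ ∣ v.map (Nat.castRingHom ℤ))
    (m : ℕ) {b j : ℕ} (hj : j < q ^ b) :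
    IsFiberTree q ζ ((List.range' (b + 1) m).map A) (residuePart (q ^ b) j v) := by
  have : NeZero q := ⟨hq.ne_zero⟩
  induction m generalizing b j with
  | zero => exact .leaf _
  | succ m ih =>
    have hlt (c : Fin q) : j + q ^ b * c < q ^ (b + 1) := by
      have := Nat.mul_le_mul_left (q ^ b) (Nat.succ_le_of_lt c.isLt)
      rw [pow_succ]
      linarith
    rw [List.range'_succ, List.map_cons, residuePart_eq_sum q hj, ← pow_succ]
    refine .node _ (fun c => ih (hlt c)) fun α hα c c' => ?_
    have hmod : j + q ^ b * c ≡ j + q ^ b * c' [MOD q ^ b] := by simp [Nat.ModEq]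
    exact aeval_residuePart_eq_of_modEq hp hq hpq (hζ α) (hω (b + 1)) (hA _ α hα) (hlt c) (hlt c')
      hmod

theorem isFiberTree_of_cyclotomic_dvd (hp : p.Prime) (hq : q.Prime) (hpq : p.Coprime q)
    (hζ : ∀ α, IsPrimitiveRoot (ζ α) (p ^ α)) (hω : ∀ β, IsPrimitiveRoot (ω β) (q ^ β))
    (hA : ∀ β, ∀ α ∈ A β, cyclotomic (p ^ α * q ^ β) ℤ ∣ v.map (Nat.castRingHom ℤ)) (n : ℕ) :
    IsFiberTree q ζ ((List.range' 1 n).map A) v := by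
  simpa [residuePart_one_zero] using
    isFiberTree_residuePart hp hq hpq hζ hω hA n (b := 0) (j := 0) (by simp)

end TreeOfPolynomial

section ExponentSets

variable {p q : ℕ} {S : Finset ℕ}

theorem meetCount_map_range' (F : Finset ℕ) (A : ℕ → Finset ℕ) (n : ℕ) :
    meetCount F ((List.range' 1 n).map A) =
      Finset.card {b ∈ Finset.Icc 1 n | ¬Disjoint (A b) F} := by
  rw [meetCount, List.countP_map, Nat.Icc_eq_range']
  simp [Finset.card, Finset.filter, List.countP_eq_length_filter, Function.comp_def]

theorem lt_sup_of_pow_dvd (hp : 1 < p) (hS₀ : 0 ∉ S) {s α : ℕ} (hs : s ∈ S) (hdvd : p ^ α ∣ s) :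
    α < S.sup id :=
  calc α < p ^ α := Nat.lt_pow_self hp
    _ ≤ s := Nat.le_of_dvd (Nat.pos_of_ne_zero fun h => hS₀ (h ▸ hs)) hdvd
    _ ≤ S.sup id := Finset.le_sup (f := id) hs

theorem expSet_finite (hp : 1 < p) (hS₀ : 0 ∉ S) : (ExpSet S p).Finite :=
  (Set.finite_Iio (S.sup id)).subset fun _ ⟨_, _, hs, hdvd, _⟩ => lt_sup_of_pow_dvd hp hS₀ hs hdvd

theorem mem_expSet (hp : p.Prime) (hpq : p.Coprime q) {α β : ℕ} (hα : 1 ≤ α)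
    (hs : p ^ α * q ^ β ∈ S) : α ∈ ExpSet S p := by
  refine ⟨hα, _, hs, dvd_mul_right _ _, fun hdvd => hp.ne_one ?_⟩
  rw [pow_succ, Nat.mul_dvd_mul_iff_left (pow_pos hp.pos α)] at hdvd
  exact (hpq.pow_right β).eq_one_of_dvd hdvd

/-- The exponents `α` with `p ^ α * q ^ β ∈ S`. The bound `α < S.sup id` only makes this a finite
set by definition; it excludes nothing when `1 < p` and `0 ∉ S`. -/
def scaleExponents (S : Finset ℕ) (p q β : ℕ) : Finset ℕ :=
  {α ∈ Finset.range (S.sup id) | p ^ α * q ^ β ∈ S}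

theorem zero_notMem_of_forall_eq_pow_mul_pow (hp : p ≠ 0) (hq : q ≠ 0)
    (hS : ∀ s ∈ S, ∃ α β, s = p ^ α * q ^ β) : 0 ∉ S := fun h => by
  obtain ⟨α, β, h⟩ := hS 0 h
  exact mul_ne_zero (pow_ne_zero α hp) (pow_ne_zero β hq) h.symm

theorem FIBs_le_pow_card_mul_pow_meetCount (hp : p.Prime) (hq : q.Prime) (hpq : p.Coprime q)
    (hS : ∀ s ∈ S, ∃ α β, s = p ^ α * q ^ β) {E T : Finset ℕ} (hE : ∀ α ∈ E, 1 ≤ α)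
    (hES : ∀ α, p ^ α ∈ S → α ∈ E) (hT : ∀ α ∈ ExpSet S p, α ∈ T) :
    FIBs S ≤ p ^ E.card * q ^ meetCount (insert 0 (T \ E))
      ((List.range' 1 (S.sup id)).map (scaleExponents S p q)) := by
  have hS₀ := zero_notMem_of_forall_eq_pow_mul_pow hp.ne_zero hq.ne_zero hS
  rw [meetCount_map_range']
  refine FIBs_le_pow_card_mul_pow_card hp hq hpq hE
    (fun β hβ => (Finset.mem_Icc.mp (Finset.mem_filter.mp hβ).1).1) (S.sup id) fun s hs => ?_
  obtain ⟨α, β, rfl⟩ := hS s hs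
  have hα := lt_sup_of_pow_dvd hp.one_lt hS₀ hs (dvd_mul_right _ _)
  have hβ := lt_sup_of_pow_dvd hq.one_lt hS₀ hs (dvd_mul_left _ _)
  refine ⟨α, hα.le, β, hβ.le, rfl, or_iff_not_imp_left.mpr fun hαE => ?_⟩
  have hβ₁ : 1 ≤ β := Nat.one_le_iff_ne_zero.mpr fun hβ₀ => hαE (hES α (by simpa [hβ₀] using hs))
  have hαT : α = 0 ∨ α ∈ T := α.eq_zero_or_pos.imp_right fun hα₁ =>
    hT α (mem_expSet hp hpq hα₁ hs)
  rw [Finset.mem_filter, Finset.mem_Icc, Finset.not_disjoint_iff]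
  refine ⟨⟨hβ₁, hβ.le⟩, α, Finset.mem_filter.mpr ⟨Finset.mem_range.mpr hα, hs⟩, ?_⟩
  simpa [hαE] using hαT

end ExponentSets

section MassBound

variable {p q : ℕ} {S : Finset ℕ} {v : ℕ[X]}

theorem FIBs_le_eval_one_of_ncard_expSet_le_two (hp : p.Prime) (hq : q.Prime) (hpq : p ≠ q)
    (hS : ∀ s ∈ S, ∃ α β, s = p ^ α * q ^ β) (hS₁ : 1 ∉ S) (hv : v ≠ 0)
    (hdvd : ∀ s ∈ S, cyclotomic s ℤ ∣ v.map (Nat.castRingHom ℤ))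
    (hexp : (ExpSet S p).ncard ≤ 2) : FIBs S ≤ v.eval 1 := by
  have : NeZero q := ⟨hq.ne_zero⟩
  have hcop : p.Coprime q := (Nat.coprime_primes hp hq).mpr hpq
  have hζ (α : ℕ) := Complex.isPrimitiveRoot_exp (p ^ α) (pow_ne_zero α hp.ne_zero)
  have hω (β : ℕ) := Complex.isPrimitiveRoot_exp (q ^ β) (pow_ne_zero β hq.ne_zero)
  have hfin : (ExpSet S p).Finite := expSet_finite hp.one_lt
    (zero_notMem_of_forall_eq_pow_mul_pow hp.ne_zero hq.ne_zero hS)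
  have hT : ∀ α ∈ hfin.toFinset, 1 ≤ α := fun α hα => (hfin.mem_toFinset.mp hα).1
  rw [Set.ncard_eq_toFinset_card _ hfin] at hexp
  have htree := isFiberTree_of_cyclotomic_dvd hp hq hcop hζ hω
    (fun β α hα => hdvd _ (Finset.mem_filter.mp hα).2) (S.sup id) (A := scaleExponents S p q)
  obtain ⟨E, hET, hE, hle⟩ := htree.fiberBound hp hcop hζ hT hexp hv
  refine (FIBs_le_pow_card_mul_pow_meetCount hp hq hcop hS (fun α hα => hT α (hET hα))
    (fun α hα => ?_) fun α => hfin.mem_toFinset.mpr).trans hle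
  have hα₁ : 1 ≤ α := Nat.one_le_iff_ne_zero.mpr fun h => hS₁ (by simpa [h] using hα)
  refine hE α (hfin.mem_toFinset.mpr (mem_expSet hp hcop (β := 0) hα₁ (by simpa using hα))) ?_
  rw [← aeval_map_natCast, ← cyclotomic_dvd_iff_aeval_eq_zero_s13 (pow_pos hp.pos α) (hζ α)]
  exact hdvd _ hα

end MassBound

/-- The weight function `w` on `ZMod M` as a polynomial with natural coefficients, so that its
mask polynomial is the image in `ℤ[X]` and its total mass the value at `1`. -/
noncomputable def weightPoly (M : ℕ) (w : ZMod M → ℕ) : ℕ[X] :=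
  ∑ i ∈ Finset.range M, monomial i (w (i : ZMod M))

theorem map_weightPoly (M : ℕ) (w : ZMod M → ℕ) :
    (weightPoly M w).map (Nat.castRingHom ℤ) = wmaskPoly M w := by
  simp only [weightPoly, wmaskPoly, Polynomial.map_sum, map_monomial, C_mul_X_pow_eq_monomial,
    eq_natCast]

theorem eval_one_weightPoly (M : ℕ) (w : ZMod M → ℕ) : (weightPoly M w).eval 1 = wmass M w := by
  simp [weightPoly, wmass, eval_finsetSum]

/-- Corollary 7.3: if `#EXP_p(S) ≤ 2` or `#EXP_q(S) ≤ 2`, then any multiset `A` with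
`Φ_s ∣ A(X)` for all `s ∈ S` satisfies `|A| ≥ FIB(S)`. -/
theorem mass_ge_fib_of_two_exponents (p q : ℕ) (hp : p.Prime) (hq : q.Prime)
    (hpq : p ≠ q) (n₁ n₂ : ℕ) (hn₁ : 1 ≤ n₁) (hn₂ : 1 ≤ n₂)
    (M : ℕ) (hM : M = p ^ n₁ * q ^ n₂)
    (S : Finset ℕ) (hS : S.Nonempty) (hSdvd : ∀ s ∈ S, s ∣ M ∧ 2 ≤ s)
    (w : ZMod M → ℕ) (hw : 0 < wmass M w)
    (hdvd : ∀ s ∈ S, cyclotomic s ℤ ∣ wmaskPoly M w)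
    (hexp : Set.ncard (ExpSet S p) ≤ 2 ∨ Set.ncard (ExpSet S q) ≤ 2) :
    FIBs S ≤ wmass M w := by
  rw [← eval_one_weightPoly] at hw ⊢
  simp only [← map_weightPoly] at hdvd
  have hform : ∀ s ∈ S, ∃ α β, s = p ^ α * q ^ β := fun s hs => by
    obtain ⟨x, y, hx, hy, rfl⟩ := Nat.dvd_mul.mp (hM ▸ (hSdvd s hs).1)
    obtain ⟨α, -, rfl⟩ := (Nat.dvd_prime_pow hp).mp hx
    obtain ⟨β, -, rfl⟩ := (Nat.dvd_prime_pow hq).mp hy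
    exact ⟨α, β, rfl⟩
  have hS₁ : 1 ∉ S := fun h => absurd (hSdvd 1 h).2 (by norm_num)
  have hv : weightPoly M w ≠ 0 := eval_one_eq_zero_iff.not.mp hw.ne'
  rcases hexp with hexp | hexp
  · exact FIBs_le_eval_one_of_ncard_expSet_le_two hp hq hpq hform hS₁ hv hdvd hexp
  · refine FIBs_le_eval_one_of_ncard_expSet_le_two hq hp hpq.symm (fun s hs => ?_) hS₁ hv hdvd hexp
    obtain ⟨α, β, h⟩ := hform s hs
    exact ⟨β, α, h.trans (mul_comm _ _)⟩
end
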